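/- arXiv:1703.07692 — 4 statements merged into one kernel-verified Lean document; each statement's English description precedes it below -/
import Mathlib

section
/- Let Λ : ℝ → ℝ be a C¹ function which is 1-periodic and satisfies ∫₀¹ Λ(s) ds < 0, and let c > 0. Then the scalar linear differential equation z'(s) = c + Λ(s) z(s) admits a solution Δ : ℝ → ℝ which is C¹, 1-periodic, and strictly positive everywhere. -/
/-!
Write `Φ t s = exp (∫ t..s Λ)` and `I = ∫ 0..T Λ`. A solution of `z' = b + Λ z` satisfies
`z (s + T) = exp I * z s + ∫ t in s..s + T, Φ t (s + T) * b t`, so for a `T`-periodic `z` and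
`I ≠ 0` there is no choice left:
`z s = (exp (-I) - 1)⁻¹ * ∫ t in s..s + T, Φ t s * b t`.
For `I < 0` the factor in front is positive, and `z` inherits its sign from `b`.
-/

open MeasureTheory Function

/-- The propagator `Φ t s = exp (∫ t..s Λ)` of the scalar equation `z' = Λ z`: the value at time `s`
of the solution that equals `1` at time `t`. The initial time is the first argument. -/
noncomputable def propagator (Λ : ℝ → ℝ) (t s : ℝ) : ℝ :=
  Real.exp (∫ u in t..s, Λ u)

section Propagator

variable {Λ : ℝ → ℝ} {T : ℝ}

theorem propagator_pos (Λ : ℝ → ℝ) (t s : ℝ) : 0 < propagator Λ t s :=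
  Real.exp_pos _

theorem propagator_self (Λ : ℝ → ℝ) (s : ℝ) : propagator Λ s s = 1 := by
  simp [propagator]

theorem propagator_mul_propagator {t r s : ℝ} (htr : IntervalIntegrable Λ volume t r)
    (hrs : IntervalIntegrable Λ volume r s) :
    propagator Λ t r * propagator Λ r s = propagator Λ t s := by
  rw [propagator, propagator, propagator, ← Real.exp_add,
    intervalIntegral.integral_add_adjacent_intervals htr hrs]

theorem propagator_add_add (hT : Periodic Λ T) (t s : ℝ) :
    propagator Λ (t + T) (s + T) = propagator Λ t s := by
  rw [propagator, ← intervalIntegral.integral_comp_add_right Λ T]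
  simp only [hT _, propagator]

theorem propagator_add_period_self (hT : Periodic Λ T) (s : ℝ) :
    propagator Λ (s + T) s = Real.exp (-∫ u in 0..T, Λ u) := by
  rw [propagator, intervalIntegral.integral_symm, hT.intervalIntegral_add_eq s 0, zero_add]

theorem hasDerivAt_propagator (hΛ : Continuous Λ) (t s : ℝ) :
    HasDerivAt (propagator Λ t) (propagator Λ t s * Λ s) s :=
  (hΛ.integral_hasStrictDerivAt t s).hasDerivAt.exp

theorem continuous_propagator_left (hΛ : ∀ u v, IntervalIntegrable Λ volume u v)
    (s : ℝ) :
    Continuous fun t ↦ propagator Λ t s := by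
  simp only [propagator, intervalIntegral.integral_symm s]
  exact (intervalIntegral.continuous_primitive hΛ s).neg.rexp

end Propagator

section PeriodicSolution

variable {E : Type*} [NormedAddCommGroup E] [NormedSpace ℝ E]
  {Λ : ℝ → ℝ} {b : ℝ → E} {T : ℝ}

theorem hasDerivAt_integral_window [CompleteSpace E] (hb : Continuous b) (T s : ℝ) :
    HasDerivAt (fun s ↦ ∫ t in s..s + T, b t) (b (s + T) - b s) s := by
  have primitive (s : ℝ) : HasDerivAt (fun s ↦ ∫ t in 0..s, b t) (b s) s :=
    (hb.integral_hasStrictDerivAt 0 s).hasDerivAt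
  have window (s : ℝ) : ∫ t in s..s + T, b t = (∫ t in 0..s + T, b t) - ∫ t in 0..s, b t :=
    (intervalIntegral.integral_interval_sub_left
      (hb.intervalIntegrable _ _) (hb.intervalIntegrable _ _)).symm
  simp only [window]
  exact ((primitive (s + T)).comp_add_const s T).sub (primitive s)

theorem hasDerivAt_integral_window_propagator_smul [CompleteSpace E] (hΛ : Continuous Λ)
    (hb : Continuous b) (T s : ℝ) :
    HasDerivAt (fun s ↦ ∫ t in s..s + T, propagator Λ t s • b t)
      (propagator Λ (s + T) s • b (s + T) - b s
        + Λ s • ∫ t in s..s + T, propagator Λ t s • b t) s := by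
  -- Factoring through time `0` moves the outer variable `s` out of the integrand.
  have factor (t s : ℝ) :
      propagator Λ t s • b t = propagator Λ 0 s • propagator Λ t 0 • b t := by
    rw [smul_smul, mul_comm, propagator_mul_propagator (hΛ.intervalIntegrable _ _)
      (hΛ.intervalIntegrable _ _)]
  have hcont : Continuous fun t ↦ propagator Λ t 0 • b t :=
    (continuous_propagator_left hΛ.intervalIntegrable 0).smul hb
  have integral_factor (s : ℝ) : ∫ t in s..s + T, propagator Λ t s • b t
      = propagator Λ 0 s • ∫ t in s..s + T, propagator Λ t 0 • b t := by
    simp only [factor _ s, intervalIntegral.integral_smul]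
  have b_eq : b s = propagator Λ 0 s • propagator Λ s 0 • b s := by
    rw [← factor, propagator_self, one_smul]
  simp only [integral_factor]
  refine ((hasDerivAt_propagator hΛ 0 s).smul
    (hasDerivAt_integral_window hcont T s)).congr_deriv ?_
  rw [smul_sub, ← factor, ← b_eq, smul_smul, mul_comm]

/-- The `T`-periodic solution of `z' = b + Λ z` for `T`-periodic `Λ` and `b`. If `∫ 0..T Λ = 0`, the
equation need not have one, and the inverse makes this function `0`. -/
noncomputable def periodicSolution (Λ : ℝ → ℝ) (b : ℝ → E) (T s : ℝ) : E :=
  (Real.exp (-∫ u in 0..T, Λ u) - 1)⁻¹ • ∫ t in s..s + T, propagator Λ t s • b t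

theorem periodic_periodicSolution (hΛT : Periodic Λ T) (hbT : Periodic b T) :
    Periodic (periodicSolution Λ b T) T := by
  intro s
  rw [periodicSolution, ← intervalIntegral.integral_comp_add_right _ T]
  simp only [propagator_add_add hΛT, hbT _, periodicSolution]

theorem hasDerivAt_periodicSolution [CompleteSpace E] (hΛ : Continuous Λ) (hΛT : Periodic Λ T)
    (hb : Continuous b) (hbT : Periodic b T) (hI : ∫ u in 0..T, Λ u ≠ 0) (s : ℝ) :
    HasDerivAt (periodicSolution Λ b T) (b s + Λ s • periodicSolution Λ b T s) s := by
  have hq : Real.exp (-∫ u in 0..T, Λ u) - 1 ≠ 0 := by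
    simpa [sub_eq_zero] using hI
  refine ((hasDerivAt_integral_window_propagator_smul hΛ hb T s).const_smul
    (Real.exp (-∫ u in 0..T, Λ u) - 1)⁻¹).congr_deriv ?_
  have jump : propagator Λ (s + T) s • b (s + T) - b s
      = (Real.exp (-∫ u in 0..T, Λ u) - 1) • b s := by
    rw [propagator_add_period_self hΛT, hbT s, sub_smul, one_smul]
  rw [jump, smul_add, inv_smul_smul₀ hq, smul_comm, periodicSolution]

theorem periodicSolution_pos {b : ℝ → ℝ} (hΛ : ∀ u v, IntervalIntegrable Λ volume u v)
    (hb : Continuous b) (hbT : Periodic b T) (hT : 0 < T) (hI : ∫ u in 0..T, Λ u < 0)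
    (hb_nonneg : ∀ s, 0 ≤ b s) (hb_pos : ∃ s, 0 < b s) (s : ℝ) :
    0 < periodicSolution Λ b T s := by
  obtain ⟨r, hr⟩ := hb_pos
  obtain ⟨t, ht, hbt⟩ := hbT.exists_mem_Ico hT r s
  have hq : 0 < Real.exp (-∫ u in 0..T, Λ u) - 1 :=
    sub_pos.2 (Real.one_lt_exp_iff.2 (neg_pos.2 hI))
  have hint : 0 < ∫ t in s..s + T, propagator Λ t s • b t :=
    intervalIntegral.integral_pos (lt_add_of_pos_right s hT)
      ((continuous_propagator_left hΛ s).smul hb).continuousOn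
      (fun t _ ↦ smul_nonneg (propagator_pos Λ t s).le (hb_nonneg t))
      ⟨t, Set.Ico_subset_Icc_self ht, smul_pos (propagator_pos Λ t s) (hbt ▸ hr)⟩
  exact smul_pos (inv_pos.2 hq) hint

theorem contDiff_one_of_hasDerivAt_add_smul {z : ℝ → E} (hΛ : Continuous Λ) (hb : Continuous b)
    (hz : ∀ s, HasDerivAt z (b s + Λ s • z s) s) : ContDiff ℝ 1 z := by
  have hdiff : Differentiable ℝ z := fun s ↦ (hz s).differentiableAt
  rw [contDiff_one_iff_deriv, funext fun s ↦ (hz s).deriv]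
  exact ⟨hdiff, hb.add (hΛ.smul hdiff.continuous)⟩

end PeriodicSolution

theorem scalar_periodic_ode_positive_solution_general {Λ b : ℝ → ℝ} {T : ℝ} (hT : 0 < T)
    (hΛ : Continuous Λ) (hΛT : Periodic Λ T) (hI : ∫ u in 0..T, Λ u < 0)
    (hb : Continuous b) (hbT : Periodic b T)
    (hb_nonneg : ∀ s, 0 ≤ b s) (hb_pos : ∃ s, 0 < b s) :
    ∃ z : ℝ → ℝ, ContDiff ℝ 1 z ∧ Periodic z T ∧ (∀ s, 0 < z s) ∧
      ∀ s, HasDerivAt z (b s + Λ s * z s) s :=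
  have hode := hasDerivAt_periodicSolution hΛ hΛT hb hbT hI.ne
  ⟨periodicSolution Λ b T, contDiff_one_of_hasDerivAt_add_smul hΛ hb hode,
    periodic_periodicSolution hΛT hbT,
    periodicSolution_pos hΛ.intervalIntegrable hb hbT hT hI hb_nonneg hb_pos, hode⟩

/-- If `Λ : ℝ → ℝ` is `C¹`, `1`-periodic and `∫₀¹ Λ < 0`, and `c > 0`,
then the linear ODE `z' = c + Λ z` admits a `C¹`, `1`-periodic, everywhere strictly
positive solution. -/
theorem scalar_periodic_ode_positive_solution
    (Λ : ℝ → ℝ) (hΛ : ContDiff ℝ 1 Λ)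
    (hper : ∀ s : ℝ, Λ (s + 1) = Λ s)
    (hint : (∫ s in (0:ℝ)..(1:ℝ), Λ s) < 0)
    (c : ℝ) (hc : 0 < c) :
    ∃ Δ : ℝ → ℝ, ContDiff ℝ 1 Δ ∧ (∀ s : ℝ, Δ (s + 1) = Δ s) ∧
      (∀ s : ℝ, 0 < Δ s) ∧
      (∀ s : ℝ, HasDerivAt Δ (c + Λ s * Δ s) s) := by
  exact scalar_periodic_ode_positive_solution_general one_pos hΛ.continuous hper hint
    continuous_const (fun _ ↦ rfl) (fun _ ↦ hc.le) ⟨0, hc⟩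
end

section
/- For κ > 0 and ω > (3√3/4) κ, one has ∫₀^{2π} ( −κ (1 + cos s) cos s ) / ( ω − κ(1 + cos s) sin s ) ds < 0. Equivalently, ∫₀^{2π} ∂_z Win(s𝟙, s) / Win(s𝟙, s) ds < 0, where Win(Y, z) = ω − κ (1/N) Σⱼ (1 + cos yⱼ) sin z and ∂_z denotes the partial derivative in the last variable. -/
open Real

/-!
Let `D s = ω - κ (1 + cos s) sin s` be the denominator. Then
`D' s = -κ (1 + cos s) cos s + κ sin² s`, so the integrand is `D' / D - κ sin² / D`. As `D` is
positive and `2π`-periodic, `D' / D = (log D)'` integrates to zero over a period, and what remains,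
`-κ ∫ sin² / D`, is negative.
-/

open Set

theorem integral_deriv_div_eq_log_sub_log {a b : ℝ} (hab : a ≤ b) {f f' : ℝ → ℝ}
    (hf : ContinuousOn f (Icc a b)) (hderiv : ∀ x ∈ Ioo a b, HasDerivAt f (f' x) x)
    (hne : ∀ x ∈ Icc a b, f x ≠ 0)
    (hint : IntervalIntegrable (fun x => f' x / f x) MeasureTheory.volume a b) :
    ∫ x in a..b, f' x / f x = log (f b) - log (f a) :=
  intervalIntegral.integral_eq_sub_of_hasDerivAt_of_le hab (hf.log hne)
    (fun x hx => (hderiv x hx).log (hne x (Ioo_subset_Icc_self hx))) hint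

theorem integral_div_neg_of_le_deriv {a b : ℝ} (hab : a < b) {f f' g : ℝ → ℝ}
    (hf : ContinuousOn f (Icc a b)) (hf' : ContinuousOn f' (Icc a b))
    (hg : ContinuousOn g (Icc a b)) (hderiv : ∀ x ∈ Ioo a b, HasDerivAt f (f' x) x)
    (hpos : ∀ x ∈ Icc a b, 0 < f x) (hends : f b ≤ f a)
    (hle : ∀ x ∈ Ioc a b, g x ≤ f' x) (hlt : ∃ c ∈ Icc a b, g c < f' c) :
    ∫ x in a..b, g x / f x < 0 := by
  have hne : ∀ x ∈ Icc a b, f x ≠ 0 := fun x hx => (hpos x hx).ne'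
  have hcont : ContinuousOn (fun x => f' x / f x) (Icc a b) := hf'.div hf hne
  obtain ⟨c, hc, hgc⟩ := hlt
  calc ∫ x in a..b, g x / f x
      < ∫ x in a..b, f' x / f x :=
        intervalIntegral.integral_lt_integral_of_continuousOn_of_le_of_exists_lt hab
          (hg.div hf hne) hcont
          (fun x hx => div_le_div_of_nonneg_right (hle x hx) (hpos x (Ioc_subset_Icc_self hx)).le)
          ⟨c, hc, div_lt_div_of_pos_right hgc (hpos c hc)⟩
    _ = log (f b) - log (f a) :=
        integral_deriv_div_eq_log_sub_log hab.le hf hderiv hne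
          (hcont.intervalIntegrable_of_Icc hab.le)
    _ ≤ 0 := sub_nonpos.2 (log_le_log (hpos b (right_mem_Icc.2 hab.le)) hends)

theorem one_add_cos_mul_sin_le (s : ℝ) : (1 + cos s) * sin s ≤ 3 * √3 / 4 := by
  have hsqrt : √3 ^ 2 = 3 := sq_sqrt (by norm_num)
  -- AM-GM for `1 + cos s` and `√3 * sin s`, which agree at the maximiser `s = π / 3`.
  have hgap : 2 * √3 * (3 * √3 / 4 - (1 + cos s) * sin s) =
      (1 + cos s - √3 * sin s) ^ 2 + 2 * (cos s - 1 / 2) ^ 2 := by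
    linear_combination (3 / 2 - sin s ^ 2) * hsqrt - 3 * sin_sq_add_cos_sq s
  have hgap_nonneg : 0 ≤ 2 * √3 * (3 * √3 / 4 - (1 + cos s) * sin s) := by
    rw [hgap]
    positivity
  exact sub_nonneg.1 (nonneg_of_mul_nonneg_right hgap_nonneg (by positivity))

theorem sub_mul_one_add_cos_mul_sin_pos {κ ω : ℝ} (hκ : 0 ≤ κ) (hω : 3 * √3 / 4 * κ < ω) (s : ℝ) :
    0 < ω - κ * (1 + cos s) * sin s := by
  have hbound := mul_le_mul_of_nonneg_left (one_add_cos_mul_sin_le s) hκ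
  linarith

theorem hasDerivAt_sub_mul_one_add_cos_mul_sin (κ ω s : ℝ) :
    HasDerivAt (fun s => ω - κ * (1 + cos s) * sin s)
      (-(κ * (1 + cos s) * cos s) + κ * sin s ^ 2) s :=
  ((((hasDerivAt_cos s).const_add 1).const_mul κ).mul (hasDerivAt_sin s)).const_sub ω
    |>.congr_deriv (by ring)

theorem integral_winfree_neg {κ ω : ℝ} (hκ : 0 < κ) (hω : 3 * √3 / 4 * κ < ω) :
    ∫ s in (0 : ℝ)..(2 * π),
      -(κ * (1 + cos s) * cos s) / (ω - κ * (1 + cos s) * sin s) < 0 := by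
  refine integral_div_neg_of_le_deriv two_pi_pos (by fun_prop) (by fun_prop) (by fun_prop)
    (fun s _ => hasDerivAt_sub_mul_one_add_cos_mul_sin κ ω s)
    (fun s _ => sub_mul_one_add_cos_mul_sin_pos hκ.le hω s) (by simp)
    (fun s _ => le_add_of_nonneg_right (by positivity))
    ⟨π / 2, ⟨by positivity, by linarith [pi_pos]⟩, ?_⟩
  simpa using hκ

/-- For `κ > 0` and `ω > (3√3/4)κ`,
`∫₀^{2π} (−κ(1 + cos s) cos s)/(ω − κ(1 + cos s) sin s) ds < 0`; equivalently,
`∫₀^{2π} ∂_z Win(s𝟙, s)/Win(s𝟙, s) ds < 0` for the Winfree coupling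
`Win(Y, z) = ω − κ (1/N) Σⱼ (1 + cos yⱼ) sin z`. -/
theorem winfree_synchronization_hypothesis
    (κ ω : ℝ) (hκ : 0 < κ) (hω : ω > 3 * Real.sqrt 3 / 4 * κ)
    (N : ℕ) (hN : 0 < N)
    (Win : (Fin N → ℝ) → ℝ → ℝ)
    (hWin : ∀ (Y : Fin N → ℝ) (z : ℝ),
      Win Y z = ω - κ * ((1 / (N : ℝ)) * ∑ j, (1 + Real.cos (Y j))) * Real.sin z) :
    (∫ s in (0:ℝ)..(2 * π),
        (-(κ * (1 + Real.cos s) * Real.cos s)) /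
          (ω - κ * (1 + Real.cos s) * Real.sin s)) < 0 ∧
    (∫ s in (0:ℝ)..(2 * π),
        deriv (Win (fun _ => s)) s / Win (fun _ => s) s) < 0 := by
  have hneg := integral_winfree_neg hκ hω
  have hdiag (s z : ℝ) : Win (fun _ => s) z = ω - κ * (1 + cos s) * sin z := by
    have hN' : (N : ℝ) ≠ 0 := by positivity
    rw [hWin, Fin.sum_const, nsmul_eq_mul, one_div, inv_mul_cancel_left₀ hN']
  have hderiv (s : ℝ) : deriv (Win (fun _ => s)) s = -(κ * (1 + cos s) * cos s) := by
    rw [funext (hdiag s)]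
    exact (((hasDerivAt_sin s).const_mul _).const_sub ω).deriv
  exact ⟨hneg, by simpa only [hderiv, hdiag] using hneg⟩
end

section
/- Let N ≥ 2 and let F : ℝᴺ × ℝ → ℝ satisfy hypotheses (H) and (H*), with L = ‖F‖_B + ‖dF‖_B + ‖d²F‖_B and α = min_{s∈[0,1]} F(s𝟙, s). Then there exists D* > 0 such that for every D ∈ (0, D*] there exists 𝓇 > 0 with the following property: for every C¹, 𝟙-periodic function H : ℝᴺ → ℝᴺ with ‖H‖_B < 𝓇, there exist X* ∈ ℝᴺ and θ* ∈ (1/L, 2/α) such that the solution X of the system xᵢ' = F(X, xᵢ) + Hᵢ(X) with X(t₀) = X* is defined for all t ≥ t₀ and satisfies X(t₀ + θ*) = X* + 𝟙, where 𝟙 = (1,…,1) ∈ ℝᴺ. -/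
open Real Set

noncomputable section

/-- The set `B ⊂ ℝᴺ⁺¹`: points `(Y, z)` all of whose pairwise coordinate differences
are at most `1`. -/
def memB {N : ℕ} (Y : Fin N → ℝ) (z : ℝ) : Prop :=
  (∀ i j : Fin N, |Y i - Y j| ≤ 1) ∧ (∀ i : Fin N, |Y i - z| ≤ 1)

/-- The set `B ⊂ ℝᴺ`: points all of whose pairwise coordinate differences are at
most `1`. -/
def memB' {N : ℕ} (Y : Fin N → ℝ) : Prop :=
  ∀ i j : Fin N, |Y i - Y j| ≤ 1

/-- Partial derivative of `F : ℝᴺ × ℝ → ℝ` in the `j`-th of the first `N` variables. -/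
def pder {N : ℕ} (F : (Fin N → ℝ) → ℝ → ℝ) (j : Fin N) (Y : Fin N → ℝ) (z : ℝ) : ℝ :=
  deriv (fun u => F (Function.update Y j u) z) (Y j)

/-- Partial derivative of `F : ℝᴺ × ℝ → ℝ` in the last variable. -/
def pderZ {N : ℕ} (F : (Fin N → ℝ) → ℝ → ℝ) (Y : Fin N → ℝ) (z : ℝ) : ℝ :=
  deriv (fun u => F Y u) z

/-- Values `|F(Y,z)|`, `(Y,z) ∈ B`. -/
def valsB {N : ℕ} (F : (Fin N → ℝ) → ℝ → ℝ) : Set ℝ :=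
  {x | ∃ Y z, memB Y z ∧ x = |F Y z|}

/-- Values of the absolute first partial derivatives of `F` on `B`. -/
def valsB_d {N : ℕ} (F : (Fin N → ℝ) → ℝ → ℝ) : Set ℝ :=
  {x | ∃ Y z, memB Y z ∧ (x = |pderZ F Y z| ∨ ∃ j, x = |pder F j Y z|)}

/-- Values of the absolute second partial derivatives of `F` on `B`. -/
def valsB_d2 {N : ℕ} (F : (Fin N → ℝ) → ℝ → ℝ) : Set ℝ :=
  {x | ∃ Y z, memB Y z ∧
    (x = |pderZ (fun Y' z' => pderZ F Y' z') Y z| ∨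
     (∃ j, x = |pder (fun Y' z' => pderZ F Y' z') j Y z|) ∨
     (∃ j, x = |pderZ (fun Y' z' => pder F j Y' z') Y z|) ∨
     (∃ j k, x = |pder (fun Y' z' => pder F j Y' z') k Y z|))}

/-- `‖F‖_B`. -/
def normB {N : ℕ} (F : (Fin N → ℝ) → ℝ → ℝ) : ℝ := sSup (valsB F)

/-- `‖dF‖_B`. -/
def normB_d {N : ℕ} (F : (Fin N → ℝ) → ℝ → ℝ) : ℝ := sSup (valsB_d F)

/-- `‖d²F‖_B`. -/
def normB_d2 {N : ℕ} (F : (Fin N → ℝ) → ℝ → ℝ) : ℝ := sSup (valsB_d2 F)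

/-- `‖H‖_B` for a map `H : ℝᴺ → ℝᴺ`. -/
def normB_vec {N : ℕ} (H : (Fin N → ℝ) → Fin N → ℝ) : ℝ :=
  sSup {x | ∃ Y, memB' Y ∧ ∃ i, x = |H Y i|}

/-- `L = ‖F‖_B + ‖dF‖_B + ‖d²F‖_B`. -/
def Lconst {N : ℕ} (F : (Fin N → ℝ) → ℝ → ℝ) : ℝ :=
  normB F + normB_d F + normB_d2 F

/-- `α = min_{s ∈ [0,1]} F(s𝟙, s)`. -/
def alphaConst {N : ℕ} (F : (Fin N → ℝ) → ℝ → ℝ) : ℝ :=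
  sInf ((fun s => F (fun _ => s) s) '' Set.Icc (0:ℝ) 1)

/-- `M = max_{s ∈ [0,1]} F(s𝟙, s)`. -/
def Mconst {N : ℕ} (F : (Fin N → ℝ) → ℝ → ℝ) : ℝ :=
  sSup ((fun s => F (fun _ => s) s) '' Set.Icc (0:ℝ) 1)

/-- Hypothesis `(H)`: `F` is `C²`, its `B`-norms `‖F‖_B, ‖dF‖_B, ‖d²F‖_B` are finite,
`F` is `𝟙`-periodic, and `min_{s∈[0,1]} F(s𝟙,s) > 0`. -/
def HypH {N : ℕ} (F : (Fin N → ℝ) → ℝ → ℝ) : Prop :=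
  ContDiff ℝ 2 (fun p : (Fin N → ℝ) × ℝ => F p.1 p.2) ∧
  BddAbove (valsB F) ∧ BddAbove (valsB_d F) ∧ BddAbove (valsB_d2 F) ∧
  (∀ (Y : Fin N → ℝ) (z : ℝ), F (fun i => Y i + 1) (z + 1) = F Y z) ∧
  0 < alphaConst F

/-- Hypothesis `(H*)`: `∫₀¹ ∂_z F(s𝟙, s)/F(s𝟙, s) ds < 0`. -/
def HypHstar {N : ℕ} (F : (Fin N → ℝ) → ℝ → ℝ) : Prop :=
  (∫ s in (0:ℝ)..(1:ℝ), pderZ F (fun _ => s) s / F (fun _ => s) s) < 0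

end

open MeasureTheory Metric Polynomial Filter
open scoped NNReal Topology

/-!
Take the phase `s`, which moves at speed `F(X, s)`, as the new time. In the coordinates
`X = s𝟙 + y` the diagonal is `y = 0`, and near it the system reads `y' = a(s) y + small` with
`a(s) = ∂_z F(s𝟙, s) / F(s𝟙, s)`, the smallness being relative to the radius of the tube. Put
`w = exp(-A) y`, where `A' = a` and `A(0) = 0`: this removes the linear part, so `w` moves little
over one unit of phase, and `y(0) = y(1)` becomes `w(0) = exp(A(1)) w(1)`. As `A(1) ≠ 0`, solving
for `w(0)` turns this into a fixed-point equation for a continuous self-map of a ball, to which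
Brouwer's theorem applies. Undoing the time change gives the orbit, with travel time
`∫₀¹ ds / F(X, s)`.

Brouwer's theorem comes from the Milnor–Rogers argument: for a `C¹` retraction `r` of the ball onto
its boundary, the volume of the image of the ball under `x + t (r x - x)` is a polynomial in `t`; it
is constant for small `t`, yet it vanishes at `t = 1`.
-/

section Polynomial

theorem exists_polynomial_eval_eq_det_one_add_smul {R M : Type*} [CommRing R] [Nontrivial R]
    [AddCommGroup M] [Module R M] [Module.Free R M] [Module.Finite R M] (f : M →ₗ[R] M) :
    ∃ p : R[X], p.natDegree ≤ Module.finrank R M ∧ ∀ t, p.eval t = LinearMap.det (1 + t • f) := by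
  classical
  let b := Module.Free.chooseBasis R M
  let A := LinearMap.toMatrix b b f
  refine ⟨((X : R[X]) • A.map C + (1 : Matrix _ _ R).map C).det, ?_, fun t => ?_⟩
  · rw [Module.finrank_eq_card_chooseBasisIndex]
    exact natDegree_det_X_add_C_le A 1
  · rw [← LinearMap.det_toMatrix b, ← coe_evalRingHom, RingHom.map_det]
    congr 1
    ext i j
    by_cases hij : i = j <;> simp [A, hij, mul_comm t, add_comm]

theorem exists_polynomial_eval_eq_integral {α : Type*} [MeasurableSpace α] {μ : Measure α} {n : ℕ}
    {p : α → ℝ[X]} (hdeg : ∀ x, (p x).natDegree ≤ n)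
    (hint : ∀ t, Integrable (fun x => (p x).eval t) μ) :
    ∃ P : ℝ[X], ∀ t, P.eval t = ∫ x, (p x).eval t ∂μ := by
  let node : Fin (n + 1) → ℝ := fun j => j
  have node_injOn : InjOn node (Finset.univ : Finset (Fin (n + 1))) :=
    fun i _ j _ h => Fin.ext (Nat.cast_injective h)
  have eq_interpolate : ∀ x, p x =
      Lagrange.interpolate Finset.univ node fun j => (p x).eval (node j) := fun x =>
    Lagrange.eq_interpolate node_injOn <| degree_le_natDegree.trans_lt <| by
      simpa using mod_cast Nat.lt_succ_of_le (hdeg x)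
  refine ⟨Lagrange.interpolate Finset.univ node fun j => ∫ x, (p x).eval (node j) ∂μ, fun t => ?_⟩
  conv_rhs => enter [2, x]; rw [eq_interpolate]
  simp only [Lagrange.interpolate_apply, eval_finsetSum, eval_mul, eval_C]
  rw [integral_finsetSum _ fun j _ => (hint (node j)).mul_const _]
  simp only [integral_mul_const]

end Polynomial

section Displacement

variable {E : Type*} [NormedAddCommGroup E] [NormedSpace ℝ E]

theorem exists_mem_segment_inter_frontier {s : Set E} {x y : E} (hx : x ∈ s) (hy : y ∉ s) :
    ∃ z ∈ segment ℝ x y, z ∈ frontier s := by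
  by_contra! hdisj
  have hcover : segment ℝ x y ⊆ interior s ∪ interior sᶜ := fun z hz => by
    by_contra h
    simp only [interior_compl, mem_union, mem_compl_iff, not_or, not_not] at h
    exact hdisj z hz ⟨h.2, h.1⟩
  obtain ⟨z, -, hzs, hzs'⟩ := (convex_segment (𝕜 := ℝ) x y).isPreconnected _ _ isOpen_interior
    isOpen_interior hcover
    ⟨x, left_mem_segment ℝ x y, (hcover (left_mem_segment ℝ x y)).resolve_right
      fun h => interior_subset h hx⟩
    ⟨y, right_mem_segment ℝ x y, (hcover (right_mem_segment ℝ x y)).resolve_left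
      fun h => hy (interior_subset h)⟩
  exact interior_subset hzs' (interior_subset hzs)

theorem lipschitzWith_indicator_of_eqOn_frontier_zero {F : Type*} [NormedAddCommGroup F]
    {s : Set E} {u : E → F} {K : ℝ≥0} (hs : IsClosed s) (hu : LipschitzOnWith K u s)
    (hfr : EqOn u 0 (frontier s)) : LipschitzWith K (s.indicator u) := by
  have cross : ∀ x ∈ s, ∀ y ∉ s, dist (s.indicator u x) (s.indicator u y) ≤ K * dist x y := by
    intro x hx y hy
    obtain ⟨z, hz, hzfr⟩ := exists_mem_segment_inter_frontier hx hy
    calc dist (s.indicator u x) (s.indicator u y)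
        = dist (u x) (u z) := by simp [hx, hy, hfr hzfr]
      _ ≤ K * dist x z := hu.dist_le_mul x hx z (hs.frontier_subset hzfr)
      _ ≤ K * dist x y := by
        gcongr
        linarith [dist_add_dist_of_mem_segment hz, dist_nonneg (x := z) (y := y)]
  refine LipschitzWith.of_dist_le_mul fun x y => ?_
  by_cases hx : x ∈ s <;> by_cases hy : y ∈ s
  · simpa [hx, hy] using hu.dist_le_mul x hx y hy
  · exact cross x hx y hy
  · simpa only [dist_comm] using cross y hy x hx
  · simpa [hx, hy] using by positivity

theorem bijective_id_add_of_lipschitzWith [CompleteSpace E] {u : E → E} {c : ℝ≥0}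
    (hu : LipschitzWith c u) (hc : c < 1) : Function.Bijective fun x => x + u x := by
  have happrox : ApproximatesLinearOn (fun x => x + u x)
      (ContinuousLinearEquiv.refl ℝ E : E →L[ℝ] E) univ c := by
    refine ApproximatesLinearOn.approximatesLinearOn_iff_lipschitzOnWith.mpr ?_
    convert! hu.lipschitzOnWith using 1
    ext x
    simp
  have hnorm : Subsingleton E ∨
      c < ‖((ContinuousLinearEquiv.refl ℝ E).symm : E →L[ℝ] E)‖₊⁻¹ := by
    rcases subsingleton_or_nontrivial E with hE | hE
    · exact Or.inl hE
    · right
      have hid : ‖((ContinuousLinearEquiv.refl ℝ E).symm : E →L[ℝ] E)‖₊ = 1 :=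
        ContinuousLinearMap.nnnorm_id
      rwa [hid, inv_one]
  exact ⟨injOn_univ.mp (happrox.injOn hnorm), happrox.surjective hnorm⟩

theorem bijOn_id_add_of_eqOn_frontier_zero [CompleteSpace E] {s : Set E} {u : E → E} {c : ℝ≥0}
    (hs : IsClosed s) (hu : LipschitzOnWith c u s) (hc : c < 1) (hfr : EqOn u 0 (frontier s)) :
    BijOn (fun x => x + u x) s s := by
  have hbij : Function.Bijective fun x => x + s.indicator u x :=
    bijective_id_add_of_lipschitzWith (lipschitzWith_indicator_of_eqOn_frontier_zero hs hu hfr) hc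
  have hcompl : EqOn (fun x => x + s.indicator u x) id sᶜ := fun x hx => by
    simp [indicator_of_notMem hx]
  have himage : (fun x => x + s.indicator u x) '' s = s := by
    rw [← compl_inj_iff, ← image_compl_eq hbij, hcompl.image_eq, image_id]
  exact (BijOn.mk (mapsTo_iff_image_subset.mpr himage.subset) hbij.injective.injOn himage.ge).congr
    fun x hx => by simp [indicator_of_mem hx]

end Displacement

section NoRetraction

theorem eventually_forall_det_one_add_smul_pos {X E : Type*} [TopologicalSpace X]
    [NormedAddCommGroup E] [NormedSpace ℝ E] [FiniteDimensional ℝ E] {s : Set X} (hs : IsCompact s)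
    {A : X → E →L[ℝ] E} (hA : Continuous A) :
    ∀ᶠ t in 𝓝 (0 : ℝ), ∀ x ∈ s, 0 < (1 + t • A x).det := by
  refine hs.eventually_forall_of_forall_eventually fun x _ => ?_
  have hcont : Continuous fun p : ℝ × X => (1 + p.1 • A p.2).det :=
    ContinuousLinearMap.continuous_det.comp (by fun_prop)
  exact (hcont.tendsto (0, x)).eventually (lt_mem_nhds (by simp [ContinuousLinearMap.det]))

section Volume

variable {E : Type*} [NormedAddCommGroup E] [NormedSpace ℝ E] [FiniteDimensional ℝ E]
  [MeasurableSpace E] [BorelSpace E] (μ : Measure E) [μ.IsAddHaarMeasure] {s : Set E}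

theorem eventually_setIntegral_det_one_add_smul_fderiv_eq (hs : IsCompact s) (hconv : Convex ℝ s)
    {u : E → E} (hu : ContDiff ℝ 1 u) (hfr : EqOn u 0 (frontier s)) :
    ∀ᶠ t in 𝓝[>] (0 : ℝ), ∫ x in s, (1 + t • fderiv ℝ u x).det ∂μ = μ.real s := by
  have := FiniteDimensional.complete ℝ E
  obtain ⟨K, hK⟩ := hu.contDiffOn.exists_lipschitzOnWith (n := 1) one_ne_zero hconv hs
  have hsmall : ∀ᶠ t in 𝓝 (0 : ℝ), ‖t‖₊ * K < 1 :=
    (Continuous.tendsto (by fun_prop : Continuous fun t : ℝ => ‖t‖₊ * K) 0).eventually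
      (gt_mem_nhds (by simp))
  filter_upwards [nhdsWithin_le_nhds hsmall, nhdsWithin_le_nhds
    (eventually_forall_det_one_add_smul_pos hs (hu.continuous_fderiv one_ne_zero))] with t htK hpos
  have hbij : BijOn (fun x => x + t • u x) s s :=
    bijOn_id_add_of_eqOn_frontier_zero hs.isClosed ((lipschitzWith_smul t).comp_lipschitzOnWith hK)
      htK fun x hx => by simp [hfr hx]
  have hderiv : ∀ x ∈ s, HasFDerivWithinAt (fun x => x + t • u x) (1 + t • fderiv ℝ u x) s x :=
    fun x _ => ((hasFDerivAt_id x).add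
      ((hu.differentiable one_ne_zero x).hasFDerivAt.const_smul t)).hasFDerivWithinAt
  calc ∫ x in s, (1 + t • fderiv ℝ u x).det ∂μ
      = ∫ x in s, |(1 + t • fderiv ℝ u x).det| • (1 : ℝ) ∂μ :=
        setIntegral_congr_fun hs.measurableSet fun x hx => by simp [abs_of_pos (hpos x hx)]
    _ = ∫ _ in (fun x => x + t • u x) '' s, (1 : ℝ) ∂μ :=
        (integral_image_eq_integral_abs_det_fderiv_smul μ hs.measurableSet hderiv hbij.injOn
          fun _ => 1).symm
    _ = μ.real s := by simp [hbij.image_eq]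

theorem setIntegral_det_fderiv_eq_of_eqOn_frontier_id (hs : IsCompact s) (hconv : Convex ℝ s)
    {r : E → E} (hr : ContDiff ℝ 1 r) (hfr : EqOn r id (frontier s)) :
    ∫ x in s, (fderiv ℝ r x).det ∂μ = μ.real s := by
  let u : E → E := r - id
  have hu : ContDiff ℝ 1 u := hr.sub contDiff_id
  choose p hdeg hp using fun x => exists_polynomial_eval_eq_det_one_add_smul
    (fderiv ℝ u x : E →ₗ[ℝ] E)
  have heval : ∀ t x, (p x).eval t = (1 + t • fderiv ℝ u x).det := fun t x => hp x t
  have hint : ∀ t, IntegrableOn (fun x => (p x).eval t) s μ := fun t => by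
    simp only [heval]
    have := hu.continuous_fderiv one_ne_zero
    exact (ContinuousLinearMap.continuous_det.comp (by fun_prop)).continuousOn.integrableOn_compact
      hs
  obtain ⟨P, hP⟩ := exists_polynomial_eval_eq_integral hdeg hint
  have hconst : P = C (μ.real s) := by
    obtain ⟨ε, hε, hsub⟩ := mem_nhdsGT_iff_exists_Ioo_subset.mp
      (eventually_setIntegral_det_one_add_smul_fderiv_eq μ hs hconv hu fun x hx => by
        simp [u, hfr hx])
    refine eq_of_infinite_eval_eq _ _ ((Ioo_infinite hε).mono fun t ht => ?_)
    simpa [hP, heval] using hsub ht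
  have hfderiv : ∀ x, 1 + (1 : ℝ) • fderiv ℝ u x = fderiv ℝ r x := fun x => by
    rw [((hr.differentiable one_ne_zero x).hasFDerivAt.sub (hasFDerivAt_id x)).fderiv]
    simp [ContinuousLinearMap.one_def]
  calc ∫ x in s, (fderiv ℝ r x).det ∂μ = P.eval 1 := by simp only [hP, heval, hfderiv]
    _ = μ.real s := by simp [hconst]

end Volume

variable {E : Type*} [NormedAddCommGroup E] [InnerProductSpace ℝ E] [FiniteDimensional ℝ E]

theorem det_fderiv_eq_zero_of_norm_eventually_const {r : E → E} {r' : E →L[ℝ] E} {x : E} {R : ℝ}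
    (hr : HasFDerivAt r r' x) (hR : R ≠ 0) (hnorm : ∀ᶠ y in 𝓝 x, ‖r y‖ = R) : r'.det = 0 := by
  by_contra hdet
  obtain ⟨v, hv⟩ := (LinearMap.equivOfDetNeZero (r' : E →ₗ[ℝ] E) hdet).surjective (r x)
  have hv' : r' v = r x := hv
  have hzero : 2 • (innerSL ℝ (r x)).comp r' = 0 :=
    hr.norm_sq.unique <| (hasFDerivAt_const (R ^ 2) x).congr_of_eventuallyEq <|
      hnorm.mono fun y hy => by simp [hy]
  simpa [hv', hnorm.self_of_nhds, hR] using DFunLike.congr_fun hzero v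

theorem not_exists_contDiff_retraction_sphere {R : ℝ} (hR : 0 < R) :
    ¬∃ r : E → E, ContDiff ℝ 1 r ∧ (∀ x, r x ∈ sphere 0 R) ∧ EqOn r id (sphere 0 R) := by
  rintro ⟨r, hr, hmem, hid⟩
  let : MeasurableSpace E := borel E
  have : BorelSpace E := ⟨rfl⟩
  have hvol := setIntegral_det_fderiv_eq_of_eqOn_frontier_id volume (isCompact_closedBall 0 R)
    (convex_closedBall 0 R) hr (by rwa [frontier_closedBall _ hR.ne'])
  have hdet : ∀ x, (fderiv ℝ r x).det = 0 := fun x =>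
    det_fderiv_eq_zero_of_norm_eventually_const (hr.differentiable one_ne_zero x).hasFDerivAt hR.ne'
      (.of_forall fun y => mem_sphere_zero_iff_norm.mp (hmem y))
  have hpos : 0 < volume.real (closedBall (0 : E) R) :=
    ENNReal.toReal_pos (measure_closedBall_pos _ _ hR).ne' measure_closedBall_lt_top.ne
  simp only [hdet, integral_zero] at hvol
  exact hpos.ne hvol

end NoRetraction

section Brouwer

theorem exists_eq_zero_of_eventually_cocompact_eq_self_of_inner {E : Type*} [NormedAddCommGroup E]
    [InnerProductSpace ℝ E] [FiniteDimensional ℝ E] {f : E → E} (hf : Continuous f)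
    (hid : ∀ᶠ x in cocompact E, f x = x) : ∃ x, f x = 0 := by
  by_contra! hne
  rw [← cobounded_eq_cocompact, hasBasis_cobounded_norm.eventually_iff] at hid
  obtain ⟨R, -, hR⟩ := hid
  obtain ⟨R', hRR', hR'⟩ : ∃ R', R < R' ∧ 0 < R' := ⟨max R 0 + 1, by grind, by grind⟩
  obtain ⟨g, hg, hgf, hgid, -⟩ := hf.exists_contDiff_approx_and_eqOn (ε := fun x => ‖f x‖) 1
    hf.norm (fun x => norm_pos_iff.mpr (hne x)) (S := {x | R' ≤ ‖x‖}) (U := {x | R < ‖x‖})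
    (isClosed_le continuous_const continuous_norm)
    ((isOpen_lt continuous_const continuous_norm).mem_nhdsSet.mpr fun x hx => hRR'.trans_le hx)
    (contDiffOn_id.congr fun x hx => hR (le_of_lt (mem_ofPred.mp hx)))
  have hg_ne : ∀ x, g x ≠ 0 := fun x hx => by simpa [hx] using hgf x
  refine not_exists_contDiff_retraction_sphere (E := E) hR'
    ⟨fun x => (R' * ‖g x‖⁻¹) • g x, ?_, fun x => ?_, fun x hx => ?_⟩
  · have hnorm_ne : ∀ x, ‖g x‖ ≠ 0 := fun x => norm_ne_zero_iff.mpr (hg_ne x)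
    exact (contDiff_const.mul ((hg.norm ℝ hg_ne).inv hnorm_ne)).smul hg
  · simp [norm_smul, hg_ne x, abs_of_pos hR']
  · rw [mem_sphere_zero_iff_norm] at hx
    have hgx : g x = x := (hgid hx.ge).trans (hR (hRR'.trans_eq hx.symm).le)
    simp [hgx, hx, hR'.ne']

variable {E : Type*} [NormedAddCommGroup E] [NormedSpace ℝ E]

theorem exists_eq_zero_of_eventually_cocompact_eq_self [FiniteDimensional ℝ E] {f : E → E}
    (hf : Continuous f) (hid : ∀ᶠ x in cocompact E, f x = x) : ∃ x, f x = 0 := by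
  let e := toEuclidean (E := E)
  obtain ⟨z, hz⟩ := exists_eq_zero_of_eventually_cocompact_eq_self_of_inner
    (f := fun z => e (f (e.symm z))) (by fun_prop)
    ((e.symm.toHomeomorph.isClosedEmbedding.tendsto_cocompact.eventually hid).mono fun z hz => by
      rw [show f (e.symm z) = e.symm z from hz, e.apply_symm_apply])
  exact ⟨e.symm z, e.map_eq_zero_iff.mp hz⟩

/-- The radial retraction of a normed space onto the closed ball of radius `D` about the origin. -/
noncomputable def radialRetraction (D : ℝ) (x : E) : E := (max 1 (‖x‖ / D))⁻¹ • x

theorem continuous_radialRetraction (D : ℝ) : Continuous (radialRetraction D : E → E) :=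
  ((by fun_prop : Continuous fun x : E => max 1 (‖x‖ / D)).inv₀
    fun _ => (lt_max_of_lt_left one_pos).ne').smul continuous_id

theorem radialRetraction_mem_closedBall {D : ℝ} (hD : 0 < D) (x : E) :
    radialRetraction D x ∈ closedBall 0 D := by
  have hmax : 0 < max 1 (‖x‖ / D) := lt_max_of_lt_left one_pos
  rw [mem_closedBall_zero_iff, radialRetraction, norm_smul, norm_inv, norm_of_nonneg hmax.le,
    inv_mul_le_iff₀ hmax, ← div_le_iff₀ hD]
  exact le_max_right _ _

theorem radialRetraction_eq_self {D : ℝ} {x : E} (hx : x ∈ closedBall 0 D) :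
    radialRetraction D x = x := by
  rw [mem_closedBall_zero_iff] at hx
  rw [radialRetraction, max_eq_left (div_le_one_of_le₀ hx ((norm_nonneg x).trans hx)), inv_one,
    one_smul]

/-- **Brouwer's fixed point theorem** for a closed ball. -/
theorem exists_fixedPoint_of_mapsTo_closedBall [FiniteDimensional ℝ E] {D : ℝ} (hD : 0 < D)
    {P : E → E} (hP : ContinuousOn P (closedBall 0 D))
    (hmaps : MapsTo P (closedBall 0 D) (closedBall 0 D)) : ∃ x ∈ closedBall 0 D, P x = x := by
  let χ : E → ℝ := fun x => max 0 (min 1 (2 - ‖x‖ / D))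
  have hχ_nonneg : ∀ x, 0 ≤ χ x := fun x => le_max_left _ _
  have hχ_le : ∀ x, χ x ≤ 1 := fun x => max_le zero_le_one (min_le_left _ _)
  have hcont : Continuous fun x => x - χ x • P (radialRetraction D x) :=
    continuous_id.sub <| (by fun_prop : Continuous χ).smul <|
      hP.comp_continuous (continuous_radialRetraction D) (radialRetraction_mem_closedBall hD)
  obtain ⟨x, hx⟩ := exists_eq_zero_of_eventually_cocompact_eq_self hcont <| by
    filter_upwards [(tendsto_norm_cocompact_atTop (E := E)).eventually_ge_atTop (2 * D)] with x hx
    have hχ : χ x = 0 := max_eq_left ((min_le_right _ _).trans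
      (sub_nonpos.mpr ((le_div_iff₀ hD).mpr hx)))
    simp [hχ]
  have hx_eq : x = χ x • P (radialRetraction D x) := sub_eq_zero.mp hx
  have hxD : ‖x‖ ≤ D := by
    calc ‖x‖ = χ x * ‖P (radialRetraction D x)‖ := by
          conv_lhs => rw [hx_eq, norm_smul, norm_of_nonneg (hχ_nonneg x)]
      _ ≤ 1 * D := mul_le_mul (hχ_le x) (mem_closedBall_zero_iff.mp
          (hmaps (radialRetraction_mem_closedBall hD x))) (norm_nonneg _) zero_le_one
      _ = D := one_mul D
  have hχ_one : χ x = 1 := by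
    have : ‖x‖ / D ≤ 1 := (div_le_one hD).mpr hxD
    simp only [χ]
    rw [min_eq_left (by linarith), max_eq_right zero_le_one]
  have hmem : x ∈ closedBall 0 D := mem_closedBall_zero_iff.mpr hxD
  refine ⟨x, hmem, ?_⟩
  rwa [hχ_one, one_smul, radialRetraction_eq_self hmem, eq_comm] at hx_eq

end Brouwer

section PeriodicSolution

variable {E : Type*} [NormedAddCommGroup E] [NormedSpace ℝ E]

theorem norm_le_add_mul_sub_of_norm_deriv_lt {f f' : ℝ → E} {a b c R : ℝ} (hc : 0 ≤ c)
    (hf : ∀ s ∈ Icc a b, HasDerivWithinAt f (f' s) (Icc a b) s)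
    (hf' : ∀ s ∈ Ico a b, ‖f s‖ ≤ R → ‖f' s‖ < c) (hR : ‖f a‖ + c * (b - a) ≤ R) :
    ∀ s ∈ Icc a b, ‖f s‖ ≤ ‖f a‖ + c * (s - a) := by
  refine fun s hs => image_norm_le_of_norm_deriv_right_lt_deriv_boundary
    (B := fun s => ‖f a‖ + c * (s - a)) (B' := fun _ => c)
    (fun s hs => (hf s hs).continuousWithinAt)
    (fun s hs => (hf s (Ico_subset_Icc_self hs)).mono_of_mem_nhdsWithin
      (Icc_mem_nhdsGE_of_mem hs))
    (by simp) (fun s => ?_) (fun s hs hfs => hf' s hs (hfs.trans_le ?_)) hs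
  · simpa using (((hasDerivAt_id s).sub_const a).const_mul c).const_add ‖f a‖
  · refine le_trans ?_ hR
    gcongr
    exact hs.2.le

theorem exists_flow_of_norm_le [CompleteSpace E] {g : ℝ → E → E} {K : ℝ≥0} {η D R : ℝ}
    (hη : 0 ≤ η) (hD : 0 ≤ D) (hR : D + η < R)
    (hlip : ∀ s ∈ Icc (0 : ℝ) 1, LipschitzOnWith K (g s) (closedBall 0 R))
    (hcont : ∀ w ∈ closedBall 0 R, ContinuousOn (g · w) (Icc 0 1))
    (hg : ∀ s ∈ Icc (0 : ℝ) 1, ∀ w ∈ closedBall 0 R, ‖g s w‖ ≤ η) :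
    ∃ Φ : E → ℝ → E, ContinuousOn (Φ · 1) (closedBall 0 D) ∧ ∀ x ∈ closedBall 0 D, Φ x 0 = x ∧
      ∀ s ∈ Icc (0 : ℝ) 1, ‖Φ x s‖ ≤ R ∧ HasDerivWithinAt (Φ x) (g s (Φ x s)) (Icc 0 1) s := by
  have hPL : IsPicardLindelof g (⟨0, by simp⟩ : Icc (0 : ℝ) 1) 0 ⟨R, by linarith⟩ ⟨D, hD⟩
      ⟨η, hη⟩ K := ⟨hlip, hcont, hg, by simpa [le_sub_iff_add_le'] using! hR.le⟩
  obtain ⟨Φ, hΦ, L, hlipΦ⟩ := hPL.exists_forall_mem_closedBall_eq_hasDerivWithinAt_lipschitzOnWith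
  refine ⟨Φ, (hlipΦ 1 (by simp)).continuousOn, fun x hx =>
    ⟨(hΦ x hx).1, fun s hs => ⟨?_, (hΦ x hx).2 s hs⟩⟩⟩
  have hx0 : ‖Φ x 0‖ ≤ D := (congrArg norm (hΦ x hx).1).trans_le (mem_closedBall_zero_iff.mp hx)
  have htrap := norm_le_add_mul_sub_of_norm_deriv_lt (c := R - D) (R := R) (by linarith)
    (hΦ x hx).2 (fun σ hσ hσR => (hg σ (Ico_subset_Icc_self hσ) _
      (mem_closedBall_zero_iff.mpr hσR)).trans_lt (by linarith)) (by linarith) s hs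
  nlinarith [hs.2]

theorem exists_hasDerivWithinAt_eq_smul_of_norm_le [FiniteDimensional ℝ E] {g : ℝ → E → E} {K : ℝ≥0}
    {η D R q : ℝ} (hη : 0 ≤ η) (hD : 0 < D) (hR : D + η < R) (hq : q ≠ 1)
    (hηq : |q| * η ≤ |1 - q| * D)
    (hlip : ∀ s ∈ Icc (0 : ℝ) 1, LipschitzOnWith K (g s) (closedBall 0 R))
    (hcont : ∀ w ∈ closedBall 0 R, ContinuousOn (g · w) (Icc 0 1))
    (hg : ∀ s ∈ Icc (0 : ℝ) 1, ∀ w ∈ closedBall 0 R, ‖g s w‖ ≤ η) :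
    ∃ w : ℝ → E, w 0 = q • w 1 ∧ ∀ s ∈ Icc (0 : ℝ) 1,
      ‖w s‖ ≤ R ∧ HasDerivWithinAt w (g s (w s)) (Icc 0 1) s := by
  have := FiniteDimensional.complete ℝ E
  obtain ⟨Φ, hΦcont, hΦ⟩ := exists_flow_of_norm_le hη hD.le hR hlip hcont hg
  have hdisp : ∀ x ∈ closedBall (0 : E) D, ‖Φ x 1 - x‖ ≤ η := fun x hx => by
    obtain ⟨hx0, hsol⟩ := hΦ x hx
    simpa only [hx0] using norm_image_sub_le_of_norm_deriv_le_segment_01'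
      (fun s hs => (hsol s hs).2) fun s hs => hg s (Ico_subset_Icc_self hs) _
        (mem_closedBall_zero_iff.mpr (hsol s (Ico_subset_Icc_self hs)).1)
  have hq' : 1 - q ≠ 0 := sub_ne_zero.mpr hq.symm
  obtain ⟨x, hx, hfix⟩ := exists_fixedPoint_of_mapsTo_closedBall hD
    (P := fun x => (1 - q)⁻¹ • q • (Φ x 1 - x))
    (((hΦcont.sub continuousOn_id).const_smul _).const_smul _) fun x hx => by
      rw [mem_closedBall_zero_iff, norm_smul, norm_smul, norm_inv, norm_eq_abs, norm_eq_abs,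
        inv_mul_le_iff₀ (abs_pos.mpr hq')]
      exact (mul_le_mul_of_nonneg_left (hdisp x hx) (abs_nonneg q)).trans hηq
  refine ⟨Φ x, ?_, (hΦ x hx).2⟩
  calc Φ x 0 = (1 - q) • x + q • x := by rw [(hΦ x hx).1]; module
    _ = q • (Φ x 1 - x) + q • x := by rw [← (inv_smul_eq_iff₀ hq').mp hfix]
    _ = q • Φ x 1 := by module

theorem exists_exp_le_and_exp_neg_le {X : Type*} [TopologicalSpace X] {s : Set X} {A : X → ℝ}
    (hs : IsCompact s) (hA : ContinuousOn A s) :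
    ∃ C > 0, ∀ x ∈ s, exp (A x) ≤ C ∧ exp (-A x) ≤ C := by
  obtain ⟨B, hB⟩ := hs.exists_bound_of_continuousOn hA
  exact ⟨exp B, exp_pos B, fun x hx => ⟨exp_le_exp.mpr ((le_abs_self _).trans (hB x hx)),
    exp_le_exp.mpr ((neg_le_abs _).trans (hB x hx))⟩⟩

/-- The vector field governing `w = exp (-A) • y` when `y' = A' • y + p s y`. -/
noncomputable def gaugeField (A : ℝ → ℝ) (p : ℝ → E → E) (s : ℝ) (w : E) : E :=
  exp (-A s) • p s (exp (A s) • w)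

theorem hasDerivWithinAt_exp_smul_of_gaugeField {A : ℝ → ℝ} {a : ℝ} {p : ℝ → E → E} {w : ℝ → E}
    {S : Set ℝ} {s : ℝ} (hA : HasDerivWithinAt A a S s)
    (hw : HasDerivWithinAt w (gaugeField A p s (w s)) S s) :
    HasDerivWithinAt (fun s => exp (A s) • w s)
      (a • exp (A s) • w s + p s (exp (A s) • w s)) S s := by
  refine (hA.exp.smul hw).congr_deriv ?_
  rw [gaugeField, smul_smul (exp (A s)), ← exp_add, add_neg_cancel, exp_zero, one_smul, add_comm,
    smul_smul, mul_comm]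

variable {A : ℝ → ℝ} {p : ℝ → E → E} {δ : ℝ}

theorem lipschitzOnWith_gaugeField {s : ℝ} {K C : ℝ≥0} {S : Set E}
    (hp : LipschitzOnWith K (p s) (closedBall 0 δ)) (hC : exp (A s) ≤ C) (hC' : exp (-A s) ≤ C)
    (hS : ∀ w ∈ S, exp (A s) • w ∈ closedBall 0 δ) :
    LipschitzOnWith (C * (K * C)) (gaugeField A p s) S :=
  have hscale : ∀ {c : ℝ}, 0 ≤ c → c ≤ C → LipschitzWith C fun y : E => c • y := fun hc hcC =>
    (lipschitzWith_smul _).weaken (NNReal.coe_le_coe.mp (by simpa [abs_of_nonneg hc] using hcC))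
  (hscale (exp_pos _).le hC').comp_lipschitzOnWith
    (hp.comp (hscale (exp_pos _).le hC).lipschitzOnWith hS)

theorem continuousOn_gaugeField {S : Set ℝ} {w : E} (hA : ContinuousOn A S)
    (hp : ContinuousOn (Function.uncurry p) (S ×ˢ closedBall 0 δ))
    (hw : ∀ s ∈ S, exp (A s) • w ∈ closedBall 0 δ) :
    ContinuousOn (gaugeField A p · w) S :=
  hA.neg.rexp.smul <| hp.comp (continuousOn_id.prodMk (hA.rexp.smul continuousOn_const))
    fun s hs => ⟨hs, hw s hs⟩

theorem exists_periodic_of_exp_le [FiniteDimensional ℝ E] {a : ℝ → ℝ} {K : ℝ≥0} {C κ : ℝ}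
    (hA : ∀ s ∈ Icc (0 : ℝ) 1, HasDerivWithinAt A (a s) (Icc 0 1) s) (hA0 : A 0 = 0)
    (hA1 : A 1 ≠ 0) (hexp : ∀ s ∈ Icc (0 : ℝ) 1, exp (A s) ≤ C ∧ exp (-A s) ≤ C) (hκ : 0 < κ)
    (hκ_lt : κ < 1) (hκA : exp (A 1) * κ ≤ |1 - exp (A 1)|) (hδ : 0 < δ)
    (hlip : ∀ s ∈ Icc (0 : ℝ) 1, LipschitzOnWith K (p s) (closedBall 0 δ))
    (hcont : ContinuousOn (Function.uncurry p) (Icc 0 1 ×ˢ closedBall 0 δ))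
    (hp : ∀ s ∈ Icc (0 : ℝ) 1, ∀ y ∈ closedBall 0 δ, ‖p s y‖ ≤ κ / (2 * C ^ 2) * δ) :
    ∃ y : ℝ → E, y 0 = y 1 ∧ ∀ s ∈ Icc (0 : ℝ) 1,
      ‖y s‖ ≤ δ ∧ HasDerivWithinAt y (a s • y s + p s (y s)) (Icc 0 1) s := by
  have hC : 0 < C := (exp_pos _).trans_le (hexp 0 (by simp)).1
  have hA_cont : ContinuousOn A (Icc 0 1) := fun s hs => (hA s hs).continuousWithinAt
  have hscale : ∀ s ∈ Icc (0 : ℝ) 1, ∀ w ∈ closedBall (0 : E) (δ / C),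
      exp (A s) • w ∈ closedBall 0 δ := fun s hs w hw => by
    rw [mem_closedBall_zero_iff] at hw ⊢
    rw [norm_smul, norm_of_nonneg (exp_pos _).le]
    calc exp (A s) * ‖w‖ ≤ C * (δ / C) := by gcongr; exact (hexp s hs).1
      _ = δ := mul_div_cancel₀ δ hC.ne'
  have hbound : ∀ s ∈ Icc (0 : ℝ) 1, ∀ w ∈ closedBall (0 : E) (δ / C),
      ‖gaugeField A p s w‖ ≤ κ * (δ / (2 * C)) := fun s hs w hw => by
    rw [gaugeField, norm_smul, norm_of_nonneg (exp_pos _).le]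
    calc exp (-A s) * ‖p s (exp (A s) • w)‖ ≤ C * (κ / (2 * C ^ 2) * δ) :=
          mul_le_mul (hexp s hs).2 (hp s hs _ (hscale s hs w hw)) (norm_nonneg _) hC.le
      _ = κ * (δ / (2 * C)) := by field_simp
  have hD : 0 < δ / (2 * C) := by positivity
  have hR : δ / (2 * C) + κ * (δ / (2 * C)) < δ / C := by
    have : δ / C = 2 * (δ / (2 * C)) := by field_simp
    nlinarith
  obtain ⟨w, hw, hsol⟩ := exists_hasDerivWithinAt_eq_smul_of_norm_le (by positivity) hD hR
    (q := exp (A 1)) ((exp_eq_one_iff _).not.mpr hA1) (by rw [abs_exp, ← mul_assoc]; gcongr)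
    (fun s hs => lipschitzOnWith_gaugeField (C := ⟨C, hC.le⟩) (hlip s hs) (hexp s hs).1
      (hexp s hs).2 (hscale s hs))
    (fun w hw => continuousOn_gaugeField hA_cont hcont fun s hs => hscale s hs w hw) hbound
  refine ⟨fun s => exp (A s) • w s, by simp [hw, hA0], fun s hs => ⟨?_, ?_⟩⟩
  · exact mem_closedBall_zero_iff.mp
      (hscale s hs _ (mem_closedBall_zero_iff.mpr (hsol s hs).1))
  · exact hasDerivWithinAt_exp_smul_of_gaugeField (hA s hs) (hsol s hs).2

theorem exists_pos_forall_exists_periodic_of_norm_sub_smul_le [FiniteDimensional ℝ E]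
    {a : ℝ → ℝ} (ha : Continuous a) (hmean : ∫ s in (0 : ℝ)..1, a s ≠ 0) :
    ∃ c > 0, ∀ δ > 0, ∀ (V : ℝ → E → E) (K : ℝ≥0),
      LipschitzOnWith K (Function.uncurry V) (Icc 0 1 ×ˢ closedBall 0 δ) →
      (∀ s ∈ Icc (0 : ℝ) 1, ∀ y ∈ closedBall 0 δ, ‖V s y - a s • y‖ ≤ c * δ) →
      ∃ y : ℝ → E, y 0 = y 1 ∧ ∀ s ∈ Icc (0 : ℝ) 1,
        ‖y s‖ ≤ δ ∧ HasDerivWithinAt y (V s (y s)) (Icc 0 1) s := by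
  let A : ℝ → ℝ := fun s => ∫ σ in (0 : ℝ)..s, a σ
  have hA : ∀ s, HasDerivAt A (a s) s := fun s => (ha.integral_hasStrictDerivAt 0 s).hasDerivAt
  obtain ⟨C, hC, hexp⟩ := exists_exp_le_and_exp_neg_le (isCompact_Icc (a := (0 : ℝ)) (b := 1))
    (A := A) fun s _ => (hA s).continuousAt.continuousWithinAt
  obtain ⟨B, hB⟩ := (isCompact_Icc (a := (0 : ℝ)) (b := 1)).exists_bound_of_continuousOn
    ha.continuousOn
  have hgap : 0 < |1 - exp (A 1)| :=
    abs_pos.mpr (sub_ne_zero.mpr (Ne.symm ((exp_eq_one_iff _).not.mpr hmean)))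
  let κ := min (1 / 2) (|1 - exp (A 1)| / exp (A 1))
  refine ⟨κ / (2 * C ^ 2), by positivity, fun δ hδ V K hV hsmall => ?_⟩
  obtain ⟨y, hy, hsol⟩ := exists_periodic_of_exp_le (p := fun s y => V s y - a s • y)
    (K := K * 1 + B.toNNReal) (κ := κ) (fun s _ => (hA s).hasDerivWithinAt) (by simp [A]) hmean
    hexp (by positivity) ((min_le_left _ _).trans_lt (by norm_num))
    ((le_div_iff₀' (exp_pos _)).mp (min_le_right _ _)) hδ
    (fun s hs => (hV.comp (LipschitzWith.prodMk_left s).lipschitzOnWith fun y hy => ⟨hs, hy⟩).sub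
      ((lipschitzWith_smul (a s)).weaken <| NNReal.coe_le_coe.mp <|
        (hB s hs).trans (le_coe_toNNReal B)).lipschitzOnWith)
    (hV.continuousOn.sub (by fun_prop)) hsmall
  exact ⟨y, hy, by simpa only [add_sub_cancel] using hsol⟩

end PeriodicSolution

section TimeChange

variable {E : Type*} [NormedAddCommGroup E] [NormedSpace ℝ E]

theorem apply_fract_of_periodic {α : Type*} {f : ℝ → α} (hf : Function.Periodic f 1) (s : ℝ) :
    f (Int.fract s) = f s := by
  simpa using hf.sub_int_mul_eq (x := s) ⌊s⌋

theorem fract_mem_Icc (s : ℝ) : Int.fract s ∈ Icc (0 : ℝ) 1 :=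
  ⟨Int.fract_nonneg s, (Int.fract_lt_one s).le⟩

theorem exists_extension_hasDerivAt_fract [CompleteSpace E] {X φ : ℝ → E}
    (hX : ∀ s ∈ Icc (0 : ℝ) 1, HasDerivWithinAt X (φ s) (Icc 0 1) s)
    (hφ : ContinuousOn φ (Icc 0 1)) (hφ01 : φ 0 = φ 1) :
    ∃ W : ℝ → E, EqOn W X (Icc 0 1) ∧ (∀ s, HasDerivAt W (φ (Int.fract s)) s) ∧
      ∀ s, W (s + 1) = W s + (X 1 - X 0) := by
  have hψ : Continuous (φ ∘ Int.fract) := hφ.comp_fract'' hφ01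
  let W : ℝ → E := fun s => X 0 + ∫ σ in (0 : ℝ)..s, φ (Int.fract σ)
  have hW : ∀ s, HasDerivAt W (φ (Int.fract s)) s := fun s =>
    (hψ.integral_hasStrictDerivAt 0 s).hasDerivAt.const_add (X 0)
  have hWX : EqOn W X (Icc 0 1) := eq_of_has_deriv_right_eq (f' := φ ∘ Int.fract)
    (fun s _ => (hW s).hasDerivWithinAt)
    (fun s hs => by
      simpa [Int.fract_eq_self.mpr hs] using (hX s (Ico_subset_Icc_self hs)).mono_of_mem_nhdsWithin
        (Icc_mem_nhdsGE_of_mem hs))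
    (fun s _ => (hW s).continuousAt.continuousWithinAt)
    (fun s hs => (hX s hs).continuousWithinAt) (by simp [W])
  refine ⟨W, hWX, hW, fun s => ?_⟩
  calc W (s + 1) = W s + ∫ σ in s..s + 1, φ (Int.fract σ) := by
        simp only [W]
        rw [add_assoc, intervalIntegral.integral_add_adjacent_intervals] <;>
          exact hψ.intervalIntegrable _ _
    _ = W s + ∫ σ in (0 : ℝ)..0 + 1, φ (Int.fract σ) := by
        rw [Function.Periodic.intervalIntegral_add_eq (fun σ => by simp) s 0]
    _ = W s + (X 1 - X 0) := by
        rw [← hWX (right_mem_Icc.mpr zero_le_one), zero_add]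
        simp [W]

theorem exists_inverse_hasDerivAt_of_le_deriv {T κ : ℝ → ℝ} {m : ℝ} (hm : 0 < m)
    (hκ : ∀ s, m ≤ κ s) (hT : ∀ s, HasDerivAt T (κ s) s) :
    ∃ S : ℝ → ℝ, Function.LeftInverse S T ∧ ∀ t, HasDerivAt S (κ (S t))⁻¹ t := by
  have hT' : Differentiable ℝ T := fun s => (hT s).differentiableAt
  have hgrow : ∀ ⦃x y⦄, x ≤ y → m * (y - x) ≤ T y - T x :=
    mul_sub_le_image_sub_of_le_deriv hT' fun s => (hT s).deriv ▸ hκ s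
  have hmono : StrictMono T :=
    strictMono_of_deriv_pos fun s => (hT s).deriv ▸ hm.trans_le (hκ s)
  have hsurj : Function.Surjective T := hT'.continuous.surjective
    (tendsto_atTop_mono' _
      ((eventually_ge_atTop 0).mono fun s hs => by rw [id]; linarith [hgrow hs])
      (tendsto_atTop_add_const_left _ (T 0) (tendsto_id.const_mul_atTop hm)))
    (tendsto_atBot_mono' _
      ((eventually_le_atBot 0).mono fun s hs => by rw [id]; linarith [hgrow hs])
      (tendsto_atBot_add_const_left _ (T 0) (tendsto_id.const_mul_atBot hm)))
  let e := hmono.orderIsoOfSurjective T hsurj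
  exact ⟨e.symm, e.symm_apply_apply, fun t =>
    (hT _).of_local_left_inverse e.symm.continuous.continuousAt (hm.trans_le (hκ _)).ne'
      (Eventually.of_forall e.apply_symm_apply)⟩

theorem exists_integralCurve_of_hasDerivAt_smul {U : E → E} {W : ℝ → E} {κ : ℝ → ℝ} {m M : ℝ}
    (hm : 0 < m) (hκ : Continuous κ) (hmκ : ∀ s, m ≤ κ s) (hκM : ∀ s, κ s ≤ M)
    (hW : ∀ s, HasDerivAt W (κ s • U (W s)) s) (t₀ : ℝ) :
    ∃ (Z : ℝ → E) (θ : ℝ), θ ∈ Icc m M ∧ (∀ t, HasDerivAt Z (U (Z t)) t) ∧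
      Z t₀ = W 0 ∧ Z (t₀ + θ) = W 1 := by
  let T : ℝ → ℝ := fun s => t₀ + ∫ σ in (0 : ℝ)..s, κ σ
  have hT : ∀ s, HasDerivAt T (κ s) s := fun s =>
    (hκ.integral_hasStrictDerivAt 0 s).hasDerivAt.const_add t₀
  have hT' : Differentiable ℝ T := fun s => (hT s).differentiableAt
  obtain ⟨S, hST, hS⟩ := exists_inverse_hasDerivAt_of_le_deriv hm hmκ hT
  have hT0 : T 0 = t₀ := by simp [T]
  refine ⟨W ∘ S, T 1 - T 0, ⟨?_, ?_⟩, fun t => ?_, ?_, ?_⟩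
  · simpa using mul_sub_le_image_sub_of_le_deriv hT' (fun s => (hT s).deriv ▸ hmκ s)
      (zero_le_one' ℝ)
  · simpa using image_sub_le_mul_sub_of_deriv_le hT' (fun s => (hT s).deriv ▸ hκM s)
      (zero_le_one' ℝ)
  · refine ((hW (S t)).scomp t (hS t)).congr_deriv ?_
    rw [smul_smul, inv_mul_cancel₀ (hm.trans_le (hmκ _)).ne', one_smul, Function.comp_apply]
  · rw [Function.comp_apply, ← hT0, hST]
  · rw [hT0, add_sub_cancel, Function.comp_apply, hST]

theorem exists_integralCurve_add_eq_of_hasDerivWithinAt_inv_smul [CompleteSpace E] {U : E → E}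
    {e : E} {X : ℝ → E} {ρ : ℝ → ℝ} {m M : ℝ} (hU : Continuous U) (hUe : Function.Periodic U e)
    (hX : ∀ s ∈ Icc (0 : ℝ) 1, HasDerivWithinAt X ((ρ s)⁻¹ • U (X s)) (Icc 0 1) s)
    (hX01 : X 1 = X 0 + e) (hρ : ContinuousOn ρ (Icc 0 1)) (hρ01 : ρ 0 = ρ 1) (hm : 0 < m)
    (hρm : ∀ s ∈ Icc (0 : ℝ) 1, ρ s ∈ Icc m M) (t₀ : ℝ) :
    ∃ (Z : ℝ → E) (θ : ℝ), θ ∈ Icc M⁻¹ m⁻¹ ∧ (∀ t, HasDerivAt Z (U (Z t)) t) ∧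
      Z (t₀ + θ) = Z t₀ + e := by
  have hM : 0 < M := hm.trans_le (nonempty_Icc.mp ⟨_, hρm 0 (by simp)⟩)
  have hρinv : ContinuousOn (fun s => (ρ s)⁻¹) (Icc 0 1) :=
    hρ.inv₀ fun s hs => (hm.trans_le (hρm s hs).1).ne'
  obtain ⟨W, hWX, hW, hWe⟩ := exists_extension_hasDerivAt_fract hX
    (hρinv.smul (hU.comp_continuousOn fun s hs => (hX s hs).continuousWithinAt))
    (by simp only [hρ01, hX01, hUe (X 0)])
  have hUW : ∀ s, U (X (Int.fract s)) = U (W s) := fun s => by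
    have hper : Function.Periodic (U ∘ W) 1 := fun s => by
      simp only [Function.comp_apply, hWe, hX01, add_sub_cancel_left, hUe (W s)]
    rw [← hWX (fract_mem_Icc s)]
    exact apply_fract_of_periodic hper s
  obtain ⟨Z, θ, hθ, hZ, hZ0, hZ1⟩ := exists_integralCurve_of_hasDerivAt_smul (U := U) (W := W)
    (κ := fun s => (ρ (Int.fract s))⁻¹) (inv_pos.mpr hM)
    (hρinv.comp_fract'' (by simp only [hρ01]))
    (fun s => inv_anti₀ (hm.trans_le (hρm _ (fract_mem_Icc s)).1) (hρm _ (fract_mem_Icc s)).2)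
    (fun s => inv_anti₀ hm (hρm _ (fract_mem_Icc s)).1) (fun s => by rw [← hUW]; exact hW s) t₀
  refine ⟨Z, θ, hθ, hZ, ?_⟩
  rw [hZ0, hZ1, hWX (left_mem_Icc.mpr zero_le_one), hWX (right_mem_Icc.mpr zero_le_one), hX01]

end TimeChange

section PhaseCoordinates

variable {N : ℕ} {F : (Fin N → ℝ) → ℝ → ℝ} {H : (Fin N → ℝ) → Fin N → ℝ}

/-- The point `s𝟙 + y`: `s` is the phase and `y` the deviation from the diagonal. -/
def diagShift (s : ℝ) (y : Fin N → ℝ) : Fin N → ℝ := fun j => s + y j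

/-- The right-hand side of the system `xᵢ' = F(X, xᵢ) + Hᵢ(X)`. -/
def coupledField (F : (Fin N → ℝ) → ℝ → ℝ) (H : (Fin N → ℝ) → Fin N → ℝ) (Y : Fin N → ℝ) :
    Fin N → ℝ :=
  fun i => F Y (Y i) + H Y i

/-- The right-hand side of the equation for `y = X - s𝟙` when the phase `s`, which moves at
speed `F(X, s)`, replaces time as the independent variable. -/
noncomputable def phaseField (F : (Fin N → ℝ) → ℝ → ℝ) (H : (Fin N → ℝ) → Fin N → ℝ) (s : ℝ)
    (y : Fin N → ℝ) : Fin N → ℝ :=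
  (F (diagShift s y) s)⁻¹ • coupledField F H (diagShift s y) - 1

/-- The integrand of `(H*)`; the linearization of `phaseField F 0` at `y = 0` is `phaseRate F`
times the identity. -/
noncomputable def phaseRate (F : (Fin N → ℝ) → ℝ → ℝ) (s : ℝ) : ℝ :=
  pderZ F (fun _ => s) s / F (fun _ => s) s

theorem diagShift_zero (s : ℝ) : diagShift s (0 : Fin N → ℝ) = fun _ => s := by
  simp [diagShift, funext_iff]

theorem contDiff_diagShift {n : WithTop ℕ∞} :
    ContDiff ℝ n fun p : ℝ × (Fin N → ℝ) => diagShift p.1 p.2 := by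
  unfold diagShift
  fun_prop

theorem memB_diagShift {s : ℝ} {y : Fin N → ℝ} (hy : ‖y‖ ≤ 1 / 2) : memB (diagShift s y) s := by
  have hy' : ∀ i, |y i| ≤ 1 / 2 := (pi_norm_le_iff_of_nonneg (by norm_num)).mp hy
  refine ⟨fun i j => ?_, fun i => ?_⟩
  · rw [diagShift, diagShift, add_sub_add_left_eq_sub]
    linarith [abs_sub (y i) (y j), hy' i, hy' j]
  · rw [diagShift, add_sub_cancel_left]
    linarith [hy' i]

theorem memB_const (s : ℝ) : memB (fun _ : Fin N => s) s := by
  simp [memB]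

theorem exists_norm_le_of_memB {G : Type*} [NormedAddCommGroup G] {f : (Fin N → ℝ) × ℝ → G}
    (hf : Continuous f) (hper : Function.Periodic f 1) :
    ∃ C, ∀ Y z, memB Y z → ‖f (Y, z)‖ ≤ C := by
  obtain ⟨C, hC⟩ := (isCompact_closedBall (0 : (Fin N → ℝ) × ℝ) 2).exists_bound_of_continuousOn
    hf.continuousOn
  refine ⟨C, fun Y z hYz => ?_⟩
  have hfract : |Int.fract z| ≤ 1 := Int.abs_fract.trans_le (Int.fract_lt_one z).le
  have hY : ∀ i, |Y i - ⌊z⌋| ≤ 2 := fun i =>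
    calc |Y i - ⌊z⌋| = |Y i - z + Int.fract z| := by rw [Int.fract, sub_add_sub_cancel]
      _ ≤ 1 + 1 := (abs_add_le _ _).trans (add_le_add (hYz.2 i) hfract)
      _ = 2 := one_add_one_eq_two
  rw [← hper.sub_zsmul_eq ⌊z⌋]
  refine hC _ (mem_closedBall_zero_iff.mpr (max_le ?_ ?_))
  · exact (pi_norm_le_iff_of_nonneg two_pos.le).mpr fun i => by simpa using hY i
  · simpa using hfract.trans one_le_two

theorem abs_le_normB (hF : Continuous (Function.uncurry F))
    (hper : Function.Periodic (Function.uncurry F) 1) {Y : Fin N → ℝ} {z : ℝ} (hYz : memB Y z) :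
    |F Y z| ≤ normB F := by
  obtain ⟨C, hC⟩ := exists_norm_le_of_memB hF hper
  refine le_csSup ⟨C, ?_⟩ ⟨Y, z, hYz, rfl⟩
  rintro _ ⟨Y, z, hYz, rfl⟩
  exact hC Y z hYz

theorem abs_le_normB_vec (hH : Continuous H) (hper : Function.Periodic H 1) {Y : Fin N → ℝ}
    (hY : memB' Y) (i : Fin N) : |H Y i| ≤ normB_vec H := by
  obtain ⟨C, hC⟩ := exists_norm_le_of_memB (hH.comp continuous_fst) fun p => hper p.1
  refine le_csSup ⟨C, ?_⟩ ⟨Y, hY, i, rfl⟩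
  rintro _ ⟨Y, hY, i, rfl⟩
  exact (norm_le_pi_norm (H Y) i).trans (hC Y (Y i) ⟨hY, fun j => hY j i⟩)

theorem alphaConst_le (hF : Continuous (Function.uncurry F))
    (hper : Function.Periodic (Function.uncurry F) 1) (s : ℝ) :
    alphaConst F ≤ F (fun _ => s) s := by
  have hdiag : Continuous fun s : ℝ => F (fun _ => s) s :=
    hF.comp (g := Function.uncurry F) (f := fun s => (fun _ => s, s)) (by fun_prop)
  rw [← apply_fract_of_periodic (f := fun s => F (fun _ => s) s) fun s => hper (fun _ => s, s)]
  exact csInf_le (isCompact_Icc.image hdiag).bddBelow ⟨_, fract_mem_Icc s, rfl⟩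

theorem hasDerivAt_fderiv_of_contDiff (hF : ContDiff ℝ 1 (Function.uncurry F)) (Y : Fin N → ℝ)
    (z : ℝ) : HasDerivAt (F Y) (fderiv ℝ (Function.uncurry F) (Y, z) (0, 1)) z :=
  (hF.differentiable one_ne_zero (Y, z)).hasFDerivAt.comp_hasDerivAt z
    ((hasDerivAt_const z Y).prodMk (hasDerivAt_id z))

theorem hasDerivAt_pderZ (hF : ContDiff ℝ 1 (Function.uncurry F)) (Y : Fin N → ℝ) (z : ℝ) :
    HasDerivAt (F Y) (pderZ F Y z) z :=
  (hasDerivAt_fderiv_of_contDiff hF Y z).differentiableAt.hasDerivAt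

theorem continuous_pderZ (hF : ContDiff ℝ 1 (Function.uncurry F)) :
    Continuous (Function.uncurry (pderZ F)) := by
  have : Function.uncurry (pderZ F) = fun p => fderiv ℝ (Function.uncurry F) p (0, 1) :=
    funext fun p => (hasDerivAt_fderiv_of_contDiff hF p.1 p.2).deriv
  rw [this]
  exact (hF.continuous_fderiv one_ne_zero).clm_apply continuous_const

theorem continuous_phaseRate (hF : ContDiff ℝ 1 (Function.uncurry F))
    (hF0 : ∀ s, F (fun _ => s) s ≠ 0) : Continuous (phaseRate F) :=
  have hdiag : Continuous fun s : ℝ => ((fun _ => s : Fin N → ℝ), s) := by fun_prop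
  ((continuous_pderZ hF).comp hdiag).div (hF.continuous.comp hdiag) hF0

theorem exists_diagonal_tube_abs_sub_phaseRate_le (hF : ContDiff ℝ 1 (Function.uncurry F)) {m c : ℝ}
    (hm : 0 ≤ m) (hmF : ∀ s, m < F (fun _ => s) s) (hc : 0 < c) :
    ∃ δ > 0, ∀ s ∈ Icc (0 : ℝ) 1, ∀ y, ‖y‖ ≤ δ →
      memB (diagShift s y) s ∧ m ≤ F (diagShift s y) s ∧
      ∀ ζ, |ζ| ≤ δ →
        |pderZ F (diagShift s y) (s + ζ) / F (diagShift s y) s - phaseRate F s| ≤ c := by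
  let f : ((Fin N → ℝ) × ℝ) × ℝ → ℝ := fun q => F (diagShift q.2 q.1.1) q.2
  let g : ((Fin N → ℝ) × ℝ) × ℝ → ℝ := fun q => pderZ F (diagShift q.2 q.1.1) (q.2 + q.1.2)
  have hshift : Continuous fun q : ((Fin N → ℝ) × ℝ) × ℝ => diagShift q.2 q.1.1 :=
    (contDiff_diagShift (n := 0)).continuous.comp
      (continuous_snd.prodMk (continuous_fst.comp continuous_fst))
  have hf : Continuous f := hF.continuous.comp (hshift.prodMk continuous_snd)
  have hg : Continuous g := (continuous_pderZ hF).comp (hshift.prodMk (by fun_prop))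
  have hF0 : ∀ s, F (fun _ => s) s ≠ 0 := fun s => (hm.trans_lt (hmF s)).ne'
  have hnear : ∀ᶠ p in 𝓝 (0 : (Fin N → ℝ) × ℝ), ‖p‖ ≤ 1 / 2 ∧ ∀ s ∈ Icc (0 : ℝ) 1,
      m < f (p, s) ∧ |g (p, s) / f (p, s) - phaseRate F s| < c := by
    refine Eventually.and ?_ (isCompact_Icc.eventually_forall_of_forall_eventually fun s _ => ?_)
    · simp_rw [← mem_closedBall_zero_iff]
      exact closedBall_mem_nhds _ one_half_pos
    · have hf0 : f (0, s) = F (fun _ => s) s := by simp [f, diagShift_zero]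
      have hrate : ContinuousAt (fun q => |g q / f q - phaseRate F q.2|) (0, s) :=
        ((hg.continuousAt.div hf.continuousAt (hf0 ▸ hF0 s)).sub
          ((continuous_phaseRate hF hF0).comp continuous_snd).continuousAt).abs
      refine (hf.continuousAt.eventually_const_lt (hf0 ▸ hmF s)).and
        (hrate.eventually_lt_const ?_)
      simpa [f, g, diagShift_zero, phaseRate] using hc
  obtain ⟨δ, hδ, hball⟩ := nhds_basis_closedBall.eventually_iff.mp hnear
  have hmem : ∀ {y : Fin N → ℝ} {ζ : ℝ}, ‖y‖ ≤ δ → |ζ| ≤ δ → (y, ζ) ∈ closedBall 0 δ :=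
    fun hy hζ => mem_closedBall_zero_iff.mpr (max_le hy hζ)
  refine ⟨δ, hδ, fun s hs y hy => ?_⟩
  obtain ⟨hnorm, hy0⟩ := hball (hmem hy (abs_zero.trans_le hδ.le))
  exact ⟨memB_diagShift ((le_max_left _ _).trans hnorm), (hy0 s hs).1.le,
    fun ζ hζ => ((hball (hmem hy hζ)).2 s hs).2.le⟩

theorem abs_div_sub_one_sub_mul_le {Y : Fin N → ℝ} {s a c δ ζ : ℝ}
    (hF : ∀ z, HasDerivAt (F Y) (pderZ F Y z) z) (h0 : F Y s ≠ 0)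
    (hc : ∀ ζ, |ζ| ≤ δ → |pderZ F Y (s + ζ) / F Y s - a| ≤ c) (hζ : |ζ| ≤ δ) :
    |F Y (s + ζ) / F Y s - 1 - a * ζ| ≤ c * |ζ| := by
  have hderiv : ∀ ζ ∈ Icc (-δ) δ, HasDerivWithinAt (fun ζ => F Y (s + ζ) / F Y s - a * ζ)
      (pderZ F Y (s + ζ) / F Y s - a) (Icc (-δ) δ) ζ := fun ζ _ => by
    simpa using ((((hF (s + ζ)).comp_const_add s ζ).div_const (F Y s)).fun_sub
      ((hasDerivAt_id ζ).const_mul a)).hasDerivWithinAt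
  have hδ : 0 ≤ δ := (abs_nonneg ζ).trans hζ
  simpa [h0, sub_right_comm] using
    (convex_Icc (-δ) δ).norm_image_sub_le_of_norm_hasDerivWithin_le hderiv
      (fun ζ hζ => hc ζ (abs_le.mpr hζ)) (x := 0) (by simpa using hδ) (abs_le.mp hζ)

theorem norm_phaseField_sub_smul_le {s a m c δ r : ℝ} {y : Fin N → ℝ} (hm : 0 < m)
    (hmF : m ≤ F (diagShift s y) s) (hc0 : 0 ≤ c)
    (hF : ∀ z, HasDerivAt (F (diagShift s y)) (pderZ F (diagShift s y) z) z)
    (hc : ∀ ζ, |ζ| ≤ δ → |pderZ F (diagShift s y) (s + ζ) / F (diagShift s y) s - a| ≤ c)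
    (hy : ‖y‖ ≤ δ) (hδ : 0 ≤ δ) (hr : 0 ≤ r) (hH : ∀ i, |H (diagShift s y) i| ≤ r) :
    ‖phaseField F H s y - a • y‖ ≤ c * δ + r / m := by
  have hF0 : 0 < F (diagShift s y) s := hm.trans_le hmF
  refine (pi_norm_le_iff_of_nonneg (by positivity)).mpr fun i => ?_
  have hyi : |y i| ≤ δ := (norm_le_pi_norm y i).trans hy
  have hlin := abs_div_sub_one_sub_mul_le hF hF0.ne' hc hyi
  have hpert : |H (diagShift s y) i / F (diagShift s y) s| ≤ r / m := by
    rw [abs_div, abs_of_pos hF0]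
    exact div_le_div₀ hr (hH i) hm hmF
  calc ‖(phaseField F H s y - a • y) i‖
      = |F (diagShift s y) (s + y i) / F (diagShift s y) s - 1 - a * y i
          + H (diagShift s y) i / F (diagShift s y) s| := by
        simp only [phaseField, coupledField, Pi.sub_apply, Pi.smul_apply, Pi.one_apply,
          smul_eq_mul, norm_eq_abs, diagShift]
        ring_nf
    _ ≤ c * |y i| + r / m := (abs_add_le _ _).trans (add_le_add hlin hpert)
    _ ≤ c * δ + r / m := by gcongr

theorem contDiff_coupledField {n : WithTop ℕ∞} (hF : ContDiff ℝ n (Function.uncurry F))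
    (hH : ContDiff ℝ n H) : ContDiff ℝ n (coupledField F H) :=
  contDiff_pi.mpr fun i => (hF.comp (contDiff_id.prodMk (contDiff_apply ℝ ℝ i))).add
    (contDiff_pi.mp hH i)

theorem exists_lipschitzOnWith_phaseField (hF : ContDiff ℝ 1 (Function.uncurry F))
    (hH : ContDiff ℝ 1 H) {I : Set ℝ} {S : Set (Fin N → ℝ)} (hI : Convex ℝ I) (hI' : IsCompact I)
    (hS : Convex ℝ S) (hS' : IsCompact S) (hF0 : ∀ s ∈ I, ∀ y ∈ S, F (diagShift s y) s ≠ 0) :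
    ∃ K, LipschitzOnWith K (Function.uncurry (phaseField F H)) (I ×ˢ S) := by
  refine ContDiffOn.exists_lipschitzOnWith (n := 1) ?_ one_ne_zero (hI.prod hS) (hI'.prod hS')
  have hspeed : ContDiff ℝ 1 fun p : ℝ × (Fin N → ℝ) => F (diagShift p.1 p.2) p.1 :=
    hF.comp (contDiff_diagShift.prodMk contDiff_fst)
  have hfield : ContDiff ℝ 1 fun p : ℝ × (Fin N → ℝ) => coupledField F H (diagShift p.1 p.2) :=
    (contDiff_coupledField hF hH).comp contDiff_diagShift
  exact ((hspeed.contDiffOn.inv fun p hp => hF0 p.1 hp.1 p.2 hp.2).smul hfield.contDiffOn).sub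
    contDiffOn_const

theorem exists_integralCurve_add_one_of_phaseField (hF : ContDiff ℝ 1 (Function.uncurry F))
    (hper : Function.Periodic (Function.uncurry F) 1) (hH : Continuous H)
    (hHper : Function.Periodic H 1) {m M : ℝ} (hm : 0 < m) {y : ℝ → Fin N → ℝ} (hy01 : y 0 = y 1)
    (hy : ∀ s ∈ Icc (0 : ℝ) 1, HasDerivWithinAt y (phaseField F H s (y s)) (Icc 0 1) s)
    (hspeed : ∀ s ∈ Icc (0 : ℝ) 1, F (diagShift s (y s)) s ∈ Icc m M) (t₀ : ℝ) :
    ∃ (Z : ℝ → Fin N → ℝ) (θ : ℝ), θ ∈ Icc M⁻¹ m⁻¹ ∧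
      (∀ t, HasDerivAt Z (coupledField F H (Z t)) t) ∧ Z (t₀ + θ) = Z t₀ + 1 := by
  have hX : ∀ s ∈ Icc (0 : ℝ) 1, HasDerivWithinAt (fun s => diagShift s (y s))
      ((F (diagShift s (y s)) s)⁻¹ • coupledField F H (diagShift s (y s))) (Icc 0 1) s :=
    fun s hs => hasDerivWithinAt_pi.mpr fun i => by
      simpa [diagShift, phaseField] using
        (hasDerivWithinAt_id s _).fun_add (hasDerivWithinAt_pi.mp (hy s hs) i)
  have hX01 : diagShift 1 (y 1) = diagShift 0 (y 0) + 1 := by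
    ext i
    simp [diagShift, hy01, add_comm]
  refine exists_integralCurve_add_eq_of_hasDerivWithinAt_inv_smul
    (contDiff_coupledField (contDiff_zero.mpr hF.continuous) (contDiff_zero.mpr hH)).continuous
    (fun Y => funext fun i => ?_) hX hX01 ?_ ?_ hm hspeed t₀
  · exact congrArg₂ (· + ·) (hper (Y, Y i)) (congrFun (hHper Y) i)
  · exact hF.continuous.comp_continuousOn
      (ContinuousOn.prodMk (fun s hs => (hX s hs).continuousWithinAt) continuousOn_id)
  · have : F (diagShift 0 (y 0) + 1) (0 + 1) = F (diagShift 0 (y 0)) 0 := hper (_, 0)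
    rw [hX01, ← this, zero_add]

theorem alphaConst_le_normB (hF : Continuous (Function.uncurry F))
    (hper : Function.Periodic (Function.uncurry F) 1) : alphaConst F ≤ normB F :=
  (alphaConst_le hF hper 0).trans ((le_abs_self _).trans
    (abs_le_normB hF hper (memB_const 0)))

theorem normB_d_pos (hF : BddAbove (valsB_d F)) {s : ℝ} (hs : pderZ F (fun _ => s) s ≠ 0) :
    0 < normB_d F :=
  (abs_pos.mpr hs).trans_le (le_csSup hF ⟨_, s, memB_const s, Or.inl rfl⟩)

theorem normB_d2_nonneg : 0 ≤ normB_d2 F := by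
  refine Real.sSup_nonneg ?_
  rintro _ ⟨Y, z, -, rfl | ⟨j, rfl⟩ | ⟨j, rfl⟩ | ⟨j, k, rfl⟩⟩ <;> exact abs_nonneg _

theorem HypHstar.exists_pderZ_ne_zero (hF : HypHstar F) : ∃ s, pderZ F (fun _ => s) s ≠ 0 := by
  by_contra! hzero
  simp [HypHstar, hzero] at hF

theorem normB_lt_Lconst (hF : HypH F) (hFstar : HypHstar F) : normB F < Lconst F := by
  obtain ⟨s, hs⟩ := hFstar.exists_pderZ_ne_zero
  rw [Lconst, add_assoc]
  exact lt_add_of_pos_right _ (add_pos_of_pos_of_nonneg (normB_d_pos hF.2.2.1 hs) normB_d2_nonneg)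

theorem poincare_fixed_point_general (hF : ContDiff ℝ 1 (Function.uncurry F))
    (hper : Function.Periodic (Function.uncurry F) 1) (hα : 0 < alphaConst F)
    (hmean : ∫ s in (0 : ℝ)..1, pderZ F (fun _ => s) s / F (fun _ => s) s ≠ 0) :
    ∃ r > 0, ∀ H : (Fin N → ℝ) → Fin N → ℝ, ContDiff ℝ 1 H → Function.Periodic H 1 →
      normB_vec H < r → ∀ t₀ : ℝ, ∃ (X : ℝ → Fin N → ℝ) (θ : ℝ),
        θ ∈ Ico (normB F)⁻¹ (2 / alphaConst F) ∧
        (∀ t, HasDerivAt X (fun i => F (X t) (X t i) + H (X t) i) t) ∧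
        X (t₀ + θ) = X t₀ + 1 := by
  have hdiag := alphaConst_le hF.continuous hper
  have hm : 0 < 2 / 3 * alphaConst F := by positivity
  obtain ⟨c, hc, hperiodic⟩ := exists_pos_forall_exists_periodic_of_norm_sub_smul_le
    (E := Fin N → ℝ) (continuous_phaseRate hF fun s => (hα.trans_le (hdiag s)).ne') hmean
  obtain ⟨δ, hδ, htube⟩ := exists_diagonal_tube_abs_sub_phaseRate_le hF hm.le
    (fun s => by linarith [hdiag s]) (half_pos hc)
  refine ⟨c / 2 * δ * (2 / 3 * alphaConst F), by positivity, fun H hH hHper hHr t₀ => ?_⟩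
  obtain ⟨K, hK⟩ := exists_lipschitzOnWith_phaseField hF hH (convex_Icc 0 1) isCompact_Icc
    (convex_closedBall 0 δ) (isCompact_closedBall 0 δ) fun s hs y hy =>
      (hm.trans_le (htube s hs y (mem_closedBall_zero_iff.mp hy)).2.1).ne'
  obtain ⟨y, hy01, hy⟩ := hperiodic δ hδ _ K hK fun s hs y hy => by
    rw [mem_closedBall_zero_iff] at hy
    obtain ⟨hmem, hlow, hrate⟩ := htube s hs y hy
    refine (norm_phaseField_sub_smul_le hm hlow (half_pos hc).le (hasDerivAt_pderZ hF _) hrate hy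
      hδ.le (by positivity) fun i =>
        (abs_le_normB_vec hH.continuous hHper hmem.1 i).trans hHr.le).trans_eq ?_
    field_simp
    ring
  obtain ⟨X, θ, hθ, hX, hX1⟩ := exists_integralCurve_add_one_of_phaseField hF hper hH.continuous
    hHper hm hy01 (fun s hs => (hy s hs).2) (fun s hs =>
      have hs' := htube s hs (y s) (hy s hs).1
      ⟨hs'.2.1, (le_abs_self _).trans (abs_le_normB hF.continuous hper hs'.1)⟩) t₀
  refine ⟨X, θ, ⟨hθ.1, hθ.2.trans_lt ?_⟩, hX, hX1⟩
  rw [inv_lt_comm₀ hm (by positivity), inv_div]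
  linarith

end PhaseCoordinates

/-- **fixed point of the Poincaré map.** Under `(H)` and `(H*)`,
with `L = ‖F‖_B + ‖dF‖_B + ‖d²F‖_B` and `α = min_{s∈[0,1]} F(s𝟙,s)`, there is
`D* > 0` such that for every `D ∈ (0, D*]` there is `𝓇 > 0` such that for every
`C¹`, `𝟙`-periodic perturbation `H` with `‖H‖_B < 𝓇` there are `X* ∈ ℝᴺ` and
`θ* ∈ (1/L, 2/α)` such that the solution starting at `X*` at time `t₀` is defined
for all `t ≥ t₀` and satisfies `X(t₀ + θ*) = X* + 𝟙`. -/
theorem poincare_fixed_point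
    (N : ℕ) (hN : 2 ≤ N)
    (F : (Fin N → ℝ) → ℝ → ℝ) (hF : HypH F) (hFstar : HypHstar F)
    (t₀ : ℝ) :
    ∃ Dstar : ℝ, 0 < Dstar ∧
      ∀ D ∈ Set.Ioc (0:ℝ) Dstar,
        ∃ r : ℝ, 0 < r ∧
          ∀ H : (Fin N → ℝ) → Fin N → ℝ,
            ContDiff ℝ 1 (fun Y => H Y) →
            (∀ Y : Fin N → ℝ, H (fun i => Y i + 1) = H Y) →
            normB_vec H < r →
            ∃ Xstar : Fin N → ℝ, ∃ θstar : ℝ,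
              θstar ∈ Set.Ioo (1 / Lconst F) (2 / alphaConst F) ∧
              ∃ X : ℝ → Fin N → ℝ,
                X t₀ = Xstar ∧
                (∀ t : ℝ, t₀ ≤ t → ∀ i,
                  HasDerivAt (fun τ => X τ i) (F (X t) (X t i) + H (X t) i) t) ∧
                X (t₀ + θstar) = fun i => Xstar i + 1 := by
  have hper : Function.Periodic (Function.uncurry F) 1 := fun p => hF.2.2.2.2.1 p.1 p.2
  obtain ⟨r, hr, hsol⟩ := poincare_fixed_point_general (hF.1.of_le one_le_two) hper
    hF.2.2.2.2.2 hFstar.ne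
  have hnormB : 0 < normB F := hF.2.2.2.2.2.trans_le (alphaConst_le_normB hF.1.continuous hper)
  refine ⟨1, one_pos, fun D _ => ⟨r, hr, fun H hH hHper hHr => ?_⟩⟩
  obtain ⟨X, θ, hθ, hX, hX1⟩ := hsol H hH hHper hHr t₀
  refine ⟨X t₀, θ, ⟨lt_of_lt_of_le ?_ hθ.1, hθ.2⟩, X, rfl, fun t _ => hasDerivAt_pi.mp (hX t), hX1⟩
  exact one_div (Lconst F) ▸ inv_strictAnti₀ hnormB (normB_lt_Lconst hF hFstar)
end

section
/- Let N ≥ 2, let F : ℝᴺ × ℝ → ℝ and H : ℝᴺ → ℝᴺ be C¹ and 𝟙-periodic, and assume solutions of the system xᵢ' = F(X, xᵢ) + Hᵢ(X) are unique for each initial condition and that the solution X with X(t₀) = X* is defined for all t ≥ t₀. If there exists θ* > 0 such that X(t₀ + θ*) = X* + 𝟙, then X(t + θ*) = X(t) + 𝟙 for all t ≥ t₀, and consequently, setting ρ = 1/θ*, the functions Ψᵢ(t) = xᵢ(t) − ρ t are periodic with period θ* on [t₀, ∞). -/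
open Real Set

/-! The time shift `X (· + θ)` solves the system because it is autonomous, and the translate `X + 𝟙`
solves it because its right-hand side is `𝟙`-periodic. Both have the same value at `t₀`, so
uniqueness identifies them. -/

section ForwardSolution

variable {ι E : Type*} [NormedAddCommGroup E] [NormedSpace ℝ E]
  {v : (ι → E) → ι → E} {t₀ t₁ θ : ℝ} {X : ℝ → ι → E} {c : ι → E}

/-- `X` solves the autonomous system `xᵢ' = vᵢ(X)` on `[t₀, ∞)`. The derivative is taken
coordinatewise, so that `ι` may be infinite, and it is two-sided also at `t₀`. -/
def IsForwardSolution (v : (ι → E) → ι → E) (t₀ : ℝ) (X : ℝ → ι → E) : Prop :=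
  ∀ t, t₀ ≤ t → ∀ i, HasDerivAt (fun τ => X τ i) (v (X t) i) t

/-- Forward uniqueness from time `t₀`: two solutions of `xᵢ' = vᵢ(X)` on `[t₀, ∞)` with the same
value at `t₀` agree on `[t₀, ∞)`. -/
def HasUniqueForwardSolutions (v : (ι → E) → ι → E) (t₀ : ℝ) : Prop :=
  ∀ Y Z : ℝ → ι → E, IsForwardSolution v t₀ Y → IsForwardSolution v t₀ Z →
    Y t₀ = Z t₀ → ∀ t, t₀ ≤ t → Y t = Z t

namespace IsForwardSolution

theorem mono (hX : IsForwardSolution v t₀ X) (h : t₀ ≤ t₁) : IsForwardSolution v t₁ X :=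
  fun t ht => hX t (h.trans ht)

theorem comp_add_const (hX : IsForwardSolution v (t₀ + θ) X) :
    IsForwardSolution v t₀ (fun t => X (t + θ)) :=
  fun t ht i => (hX (t + θ) (by gcongr) i).comp_add_const t θ

theorem add_const (hX : IsForwardSolution v t₀ X) (hv : Function.Periodic v c) :
    IsForwardSolution v t₀ (fun t => X t + c) := by
  intro t ht i
  rw [hv (X t)]
  exact (hX t ht i).add_const (c i)

theorem apply_add_eq_add_of_return (hX : IsForwardSolution v t₀ X)
    (huniq : HasUniqueForwardSolutions v t₀) (hv : Function.Periodic v c) (hθ : 0 ≤ θ)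
    (hreturn : X (t₀ + θ) = X t₀ + c) {t : ℝ} (ht : t₀ ≤ t) : X (t + θ) = X t + c :=
  have hshift : IsForwardSolution v t₀ (fun t => X (t + θ)) :=
    (hX.mono (le_add_of_nonneg_right hθ)).comp_add_const
  huniq _ _ hshift (hX.add_const hv) hreturn t ht

end IsForwardSolution

end ForwardSolution

/-- The vector field `X ↦ (F(X, xᵢ) + Hᵢ(X))ᵢ` of the perturbed mean field system. -/
def perturbedMeanField {ι E : Type*} [Add E] (F : (ι → E) → E → E) (H : (ι → E) → ι → E) :
    (ι → E) → ι → E :=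
  fun X i => F X (X i) + H X i

theorem perturbedMeanField_periodic {ι E : Type*} [Add E] {F : (ι → E) → E → E}
    {H : (ι → E) → ι → E} {c : E} (hF : ∀ Y z, F (fun i => Y i + c) (z + c) = F Y z)
    (hH : ∀ Y, H (fun i => Y i + c) = H Y) :
    Function.Periodic (perturbedMeanField F H) (fun _ => c) := fun X =>
  funext fun i => congrArg₂ (· + ·) (hF X (X i)) (congrFun (hH X) i)

theorem sub_div_mul_add_eq_of_eq_add {K : Type*} [Field K] {x y θ : K} (c t : K)
    (hθ : θ ≠ 0) (h : y = x + c) : y - c / θ * (t + θ) = x - c / θ * t := by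
  rw [h, mul_add, div_mul_cancel₀ c hθ, add_sub_add_right_eq_sub]

theorem shift_periodicity_general {ι : Type*} {F : (ι → ℝ) → ℝ → ℝ} {H : (ι → ℝ) → ι → ℝ}
    {t₀ θ : ℝ} {X : ℝ → ι → ℝ}
    (hFper : ∀ (Y : ι → ℝ) (z : ℝ), F (fun i => Y i + 1) (z + 1) = F Y z)
    (hHper : ∀ Y : ι → ℝ, H (fun i => Y i + 1) = H Y)
    (huniq : HasUniqueForwardSolutions (perturbedMeanField F H) t₀) (hθ : 0 < θ)
    (hX : IsForwardSolution (perturbedMeanField F H) t₀ X)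
    (hreturn : X (t₀ + θ) = fun i => X t₀ i + 1) :
    (∀ t, t₀ ≤ t → X (t + θ) = fun i => X t i + 1) ∧
      ∀ t, t₀ ≤ t → ∀ i, X (t + θ) i - 1 / θ * (t + θ) = X t i - 1 / θ * t := by
  have hshift : ∀ t, t₀ ≤ t → X (t + θ) = fun i => X t i + 1 := fun t ht =>
    hX.apply_add_eq_add_of_return huniq (perturbedMeanField_periodic hFper hHper) hθ.le hreturn ht
  exact ⟨hshift, fun t ht i =>
    sub_div_mul_add_eq_of_eq_add 1 t hθ.ne' (congrFun (hshift t ht) i)⟩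

/-- Let `F`, `H` be `C¹` and `𝟙`-periodic, assume uniqueness of
solutions of the perturbed system for a given initial condition, and let `X` be a
solution on `[t₀, ∞)` with `X(t₀) = X*`. If `X(t₀ + θ*) = X* + 𝟙` for some
`θ* > 0`, then `X(t + θ*) = X(t) + 𝟙` for all `t ≥ t₀`; consequently, with
`ρ = 1/θ*`, the functions `Ψᵢ(t) = xᵢ(t) − ρ t` are `θ*`-periodic on `[t₀, ∞)`. -/
theorem shift_periodicity
    (N : ℕ) (hN : 2 ≤ N)
    (F : (Fin N → ℝ) → ℝ → ℝ)
    (hFsmooth : ContDiff ℝ 1 (fun p : (Fin N → ℝ) × ℝ => F p.1 p.2))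
    (hFper : ∀ (Y : Fin N → ℝ) (z : ℝ), F (fun i => Y i + 1) (z + 1) = F Y z)
    (H : (Fin N → ℝ) → Fin N → ℝ)
    (hHsmooth : ContDiff ℝ 1 (fun Y => H Y))
    (hHper : ∀ Y : Fin N → ℝ, H (fun i => Y i + 1) = H Y)
    (t₀ : ℝ)
    (huniq : ∀ Y Z : ℝ → Fin N → ℝ,
      (∀ t : ℝ, t₀ ≤ t → ∀ i,
        HasDerivAt (fun τ => Y τ i) (F (Y t) (Y t i) + H (Y t) i) t) →
      (∀ t : ℝ, t₀ ≤ t → ∀ i,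
        HasDerivAt (fun τ => Z τ i) (F (Z t) (Z t i) + H (Z t) i) t) →
      Y t₀ = Z t₀ → ∀ t : ℝ, t₀ ≤ t → Y t = Z t)
    (Xstar : Fin N → ℝ) (θstar : ℝ) (hθ : 0 < θstar)
    (X : ℝ → Fin N → ℝ)
    (hX0 : X t₀ = Xstar)
    (hX : ∀ t : ℝ, t₀ ≤ t → ∀ i,
      HasDerivAt (fun τ => X τ i) (F (X t) (X t i) + H (X t) i) t)
    (hreturn : X (t₀ + θstar) = fun i => Xstar i + 1) :
    (∀ t : ℝ, t₀ ≤ t → X (t + θstar) = fun i => X t i + 1) ∧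
    (∀ t : ℝ, t₀ ≤ t → ∀ i,
      X (t + θstar) i - (1 / θstar) * (t + θstar) = X t i - (1 / θstar) * t) := by
  subst hX0
  exact shift_periodicity_general hFper hHper huniq hθ hX hreturn
end
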